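/- Let n ≥ 1 be an integer, r ∈ (0, π/2), η ∈ (0, π), and suppose φ ∈ (−π, 0) satisfies the critical point equation φ + η = cos r·sin φ·arccos(cos φ·cos r)/√(1 − cos²r·cos²φ). Set u = cos r·cos φ. Then lim_{t→0⁺} p_t(r,η) · (4πt)^{2n+3/2} · (sin η·sin r/(−sin φ)) · (1−u²)^n · √(1 − u·arccos(u)/√(1−u²)) · (arccos u)^{−(2n+1)} · e^{(φ+η)²·tan²r/(4t·sin²φ)} = 1; that is, p_t(r,η) ∼ −(1/(4πt)^{2n+3/2})·(sin φ/(sin η·sin r))·((arccos u)^{2n+1}/√(1 − u·arccos(u)/√(1−u²)))·e^{−(φ+η)²·tan²r/(4t·sin²φ)}/(1−u²)^n as t → 0⁺. -/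

import Mathlib

open Real MeasureTheory Filter Topology Set

noncomputable section

/-- The defining formula of the Jacobi polynomial `P_k^{(α,β)}` on `(-1,1)`. -/
def jacobiFormula (k α β : ℕ) (x : ℝ) : ℝ :=
  ((-1 : ℝ) ^ k / (2 ^ k * Nat.factorial k)) * (1 - x) ^ (-(α : ℤ)) * (1 + x) ^ (-(β : ℤ)) *
    iteratedDeriv k (fun y => (1 - y) ^ (α + k) * (1 + y) ^ (β + k)) x

/-- `J k α β` is the Jacobi polynomial `P_k^{(α,β)}`: a polynomial function satisfying the
defining formula on `(-1,1)`. -/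
def IsJacobi (J : ℕ → ℕ → ℕ → ℝ → ℝ) : Prop :=
  ∀ k α β : ℕ, (∃ p : Polynomial ℝ, ∀ x : ℝ, J k α β x = p.eval x) ∧
    ∀ x ∈ Set.Ioo (-1 : ℝ) 1, J k α β x = jacobiFormula k α β x

/-- The vertical factor `sin((m+1)η)/sin η`, extended by its limit `m+1` at `η = 0`. -/
def vertFactor (m : ℕ) (η : ℝ) : ℝ :=
  if η = 0 then (m + 1 : ℝ) else Real.sin ((m + 1) * η) / Real.sin η

/-- The general term of the double series defining the subelliptic heat kernel of the
quaternionic Hopf fibration on `S^{4n+3}`. -/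
def pTerm (n : ℕ) (J : ℕ → ℕ → ℕ → ℝ → ℝ) (t r η : ℝ) (mk : ℕ × ℕ) : ℝ :=
  (Real.Gamma (2 * n) / (2 * Real.pi ^ (2 * n + 2))) *
    (2 * (mk.2 : ℝ) + mk.1 + 2 * n + 1) * ((mk.1 : ℝ) + 1) *
    (Nat.choose (mk.2 + mk.1 + 2 * n) (2 * n - 1) : ℝ) *
    Real.exp (-(4 * ((mk.2 : ℝ) * (mk.2 + 2 * n + mk.1 + 1) + n * mk.1)) * t) *
    vertFactor mk.1 η * Real.cos r ^ mk.1 * J mk.2 (2 * n - 1) (mk.1 + 1) (Real.cos (2 * r))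

/-- The subelliptic heat kernel of the quaternionic Hopf fibration on `S^{4n+3}`. -/
def pKernel (n : ℕ) (J : ℕ → ℕ → ℕ → ℝ → ℝ) (t r η : ℝ) : ℝ :=
  ∑' mk : ℕ × ℕ, pTerm n J t r η mk

/-- The defining formula of the Gegenbauer polynomial `C_m^{2n+1}` on `(-1,1)`. -/
def gegenbauerFormula (n m : ℕ) (x : ℝ) : ℝ :=
  ((-1 : ℝ) ^ m / 2 ^ m) *
    (Real.Gamma ((m : ℝ) + 4 * n + 2) * Real.Gamma (2 * (n : ℝ) + 3 / 2) /
      (Real.Gamma (4 * (n : ℝ) + 2) * Real.Gamma ((m : ℝ) + 1) *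
        Real.Gamma (2 * (n : ℝ) + m + 3 / 2))) *
    (1 - x ^ 2) ^ (-(2 * (n : ℝ) + 1 / 2)) *
    iteratedDeriv m (fun y => (1 - y ^ 2) ^ (2 * (n : ℝ) + m + 1 / 2)) x

/-- `C m` is the Gegenbauer polynomial `C_m^{2n+1}`. -/
def IsGegenbauer (n : ℕ) (C : ℕ → ℝ → ℝ) : Prop :=
  ∀ m : ℕ, (∃ p : Polynomial ℝ, ∀ x : ℝ, C m x = p.eval x) ∧
    ∀ x ∈ Set.Ioo (-1 : ℝ) 1, C m x = gegenbauerFormula n m x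

/-- The Riemannian heat kernel of `S^{4n+3}`. -/
def qKernel (n : ℕ) (C : ℕ → ℝ → ℝ) (t x : ℝ) : ℝ :=
  (Real.Gamma (2 * n + 1) / (2 * Real.pi ^ (2 * n + 2))) *
    ∑' m : ℕ, ((m : ℝ) + 2 * n + 1) * Real.exp (-((m : ℝ) * (m + 4 * n + 2)) * t) * C m x

/-- The general term of the double series defining the subelliptic heat kernel on `CP^{2n+1}`. -/
def hTerm (n : ℕ) (J : ℕ → ℕ → ℕ → ℝ → ℝ) (t r φ : ℝ) (mk : ℕ × ℕ) : ℝ :=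
  (Real.Gamma (2 * n) / (4 * Real.pi ^ (2 * n + 2))) *
    (2 * (mk.2 : ℝ) + 2 * mk.1 + 2 * n + 1) * (2 * (mk.1 : ℝ) + 1) *
    (Nat.choose (mk.2 + 2 * mk.1 + 2 * n) (2 * n - 1) : ℝ) *
    Real.exp (-(4 * (mk.2 : ℝ) * (mk.2 + 2 * n + 2 * mk.1 + 1) + 8 * n * mk.1) * t) *
    Real.cos r ^ (2 * mk.1) * J mk.1 0 0 (Real.cos (2 * φ)) *
    J mk.2 (2 * n - 1) (2 * mk.1 + 1) (Real.cos (2 * r))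

/-- The subelliptic heat kernel of the fibration `CP^1 → CP^{2n+1} → HP^n`. -/
def hKernel (n : ℕ) (J : ℕ → ℕ → ℕ → ℝ → ℝ) (t r φ : ℝ) : ℝ :=
  ∑' mk : ℕ × ℕ, hTerm n J t r φ mk

end

/-!
Put `α = 2n - 1`, `c = cos r` and `θ = -φ`. On the level `l = m + 2k` the eigenvalue is
`N² - (m + 1)² - (α + 1)(α + 3)` with `N = l + α + 2`. The growing factor
`e^{t(m+1)²} sin ((m+1)η)` is a Gaussian average of `sin ((m+1)w)` over any vertical line, and the
radial factors sum, level by level, to a Gegenbauer polynomial at `c cos w`, hence to a derivative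
of the Chebyshev polynomial `T_N`. Cauchy's formula on a circle of radius `t` trades this
derivative for the value `cos (N arccos z)`, and Poisson summation over `N` leaves
`e^{-(arccos z)² / 4t}` up to a bounded factor tending to `1`. The critical point equation says
that the total phase `(arccos (c cos w))² - (w - η)²` is stationary at `w = θ`. Integrating over
the vertical line through `θ` at scale `√t`, dominated convergence gives the limit: the Gaussian
integral produces the Hessian and the circle integral the power of `arccos u`.
-/

namespace HopfHeatKernel

open Complex (I)
open scoped Nat

/-! ### Jacobi polynomials -/

/-- The coefficient of `z ^ s` in the Jacobi polynomial `P_k^{(α,β)}(2z - 1)`. -/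
def jacobiCoeff (k α β s : ℕ) : ℝ :=
  (-1) ^ (k + s) * ((k + β).choose (β + s) : ℝ) * ((k + α + β + s).choose s : ℝ)

/-- The Jacobi polynomial `P_k^{(α,β)}`, expanded at the endpoint `-1` and evaluated at
`2z - 1`. -/
noncomputable def jacobiSum (k α β : ℕ) (z : ℝ) : ℝ :=
  ∑ s ∈ Finset.range (k + 1), jacobiCoeff k α β s * z ^ s

lemma jacobiCoeff_eq_zero_of_lt {k s : ℕ} (α β : ℕ) (h : k < s) : jacobiCoeff k α β s = 0 := by
  simp [jacobiCoeff, Nat.choose_eq_zero_of_lt (show k + β < β + s by omega)]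

lemma jacobiCoeff_succ_zero (k α β : ℕ) :
    ((k : ℝ) + 1) * jacobiCoeff (k + 1) α β 0 =
      -((β : ℝ) + k + 1) * jacobiCoeff k (α + 1) β 0 := by
  have hchoose : ((k : ℝ) + β + 1) * ((k + β).choose k : ℝ) =
      ((k + β + 1).choose (k + 1) : ℝ) * (k + 1) := by
    exact_mod_cast Nat.add_one_mul_choose_eq (k + β) k
  simp only [jacobiCoeff, add_zero, Nat.choose_zero_right]
  rw [← Nat.choose_symm_add, ← Nat.choose_symm_add, add_right_comm k 1 β, pow_succ]
  linear_combination (-1 : ℝ) ^ k * hchoose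

lemma jacobiCoeff_succ_succ (k α β s : ℕ) :
    ((k : ℝ) + 1) * jacobiCoeff (k + 1) α β (s + 1) =
      ((α : ℝ) + k + 1) * jacobiCoeff k α (β + 1) s
        - ((β : ℝ) + k + 1) *
          (jacobiCoeff k (α + 1) β (s + 1) - jacobiCoeff k (α + 1) β s) := by
  have absorb_left : ((k : ℝ) + β + 1) * ((k + β).choose (β + s) : ℝ) =
      ((k + β + 1).choose (β + s + 1) : ℝ) * (β + s + 1) := by
    exact_mod_cast Nat.add_one_mul_choose_eq (k + β) (β + s)
  have absorb_right : ((k : ℝ) + α + β + s + 1 + 1) * ((k + α + β + s + 1).choose s : ℝ) =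
      ((k + α + β + s + 2).choose (s + 1) : ℝ) * (s + 1) := by
    exact_mod_cast Nat.add_one_mul_choose_eq (k + α + β + s + 1) s
  have pascal : ((k + β + 1).choose (β + s + 1) : ℝ) =
      (k + β).choose (β + s) + (k + β).choose (β + s + 1) := by
    exact_mod_cast Nat.choose_succ_succ (k + β) (β + s)
  simp only [jacobiCoeff, show k + 1 + β = k + β + 1 by omega,
    show β + (s + 1) = β + s + 1 by omega, show β + 1 + s = β + s + 1 by omega,
    show k + 1 + α + β + (s + 1) = k + α + β + s + 2 by omega,
    show k + (β + 1) = k + β + 1 by omega, show k + α + (β + 1) + s = k + α + β + s + 1 by omega,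
    show k + (α + 1) + β + (s + 1) = k + α + β + s + 2 by omega,
    show k + (α + 1) + β + s = k + α + β + s + 1 by omega,
    show k + 1 + (s + 1) = k + s + 2 by omega, show k + (s + 1) = k + s + 1 by omega,
    pow_succ (-1 : ℝ)]
  rw [eq_sub_of_add_eq' pascal.symm]
  generalize ((k + β + 1).choose (β + s + 1) : ℝ) = X at *
  generalize ((k + α + β + s + 2).choose (s + 1) : ℝ) = Y at *
  generalize ((k + α + β + s + 1).choose s : ℝ) = Z at *
  linear_combination ((-1) ^ (k + s) * Y - (-1) ^ (k + s) * Z) * absorb_left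
    - (-1) ^ (k + s) * X * absorb_right

lemma jacobiSum_eq_zero_term_add (k α β : ℕ) (z : ℝ) :
    jacobiSum k α β z = jacobiCoeff k α β 0 +
      ∑ s ∈ Finset.range (k + 1), jacobiCoeff k α β (s + 1) * z ^ (s + 1) := by
  have hextend : jacobiSum k α β z =
      ∑ s ∈ Finset.range (k + 2), jacobiCoeff k α β s * z ^ s := by
    rw [Finset.sum_range_succ, jacobiCoeff_eq_zero_of_lt α β k.lt_succ_self, zero_mul, add_zero,
      jacobiSum]
  rw [hextend, Finset.sum_range_succ', pow_zero, mul_one, add_comm]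

lemma jacobiSum_succ (k α β : ℕ) (z : ℝ) :
    ((k : ℝ) + 1) * jacobiSum (k + 1) α β z =
      ((α : ℝ) + k + 1) * z * jacobiSum k α (β + 1) z
        - ((β : ℝ) + k + 1) * (1 - z) * jacobiSum k (α + 1) β z := by
  have htail : ((k : ℝ) + 1) *
        ∑ s ∈ Finset.range (k + 1), jacobiCoeff (k + 1) α β (s + 1) * z ^ (s + 1) =
      ((α : ℝ) + k + 1) * z * jacobiSum k α (β + 1) z
        - ((β : ℝ) + k + 1) *
          ∑ s ∈ Finset.range (k + 1), jacobiCoeff k (α + 1) β (s + 1) * z ^ (s + 1)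
        + ((β : ℝ) + k + 1) * z * jacobiSum k (α + 1) β z := by
    simp only [jacobiSum, Finset.mul_sum, ← Finset.sum_sub_distrib, ← Finset.sum_add_distrib]
    refine Finset.sum_congr rfl fun s _ => ?_
    linear_combination z ^ (s + 1) * jacobiCoeff_succ_succ k α β s
  have hsplit_left : jacobiSum (k + 1) α β z = jacobiCoeff (k + 1) α β 0 +
      ∑ s ∈ Finset.range (k + 1), jacobiCoeff (k + 1) α β (s + 1) * z ^ (s + 1) := by
    rw [jacobiSum, Finset.sum_range_succ', pow_zero, mul_one, add_comm]
  have hsplit_right := jacobiSum_eq_zero_term_add k (α + 1) β z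
  linear_combination ((k : ℝ) + 1) * hsplit_left + htail + jacobiCoeff_succ_zero k α β
    + ((β : ℝ) + k + 1) * hsplit_right

lemma deriv_one_sub_pow_mul_one_add_pow (a b : ℕ) :
    deriv (fun y : ℝ => (1 - y) ^ (a + 1) * (1 + y) ^ (b + 1)) = fun y =>
      ((b : ℝ) + 1) * ((1 - y) ^ (a + 1) * (1 + y) ^ b) +
        (-((a : ℝ) + 1)) * ((1 - y) ^ a * (1 + y) ^ (b + 1)) := by
  funext y
  have hleft := ((hasDerivAt_id y).const_sub 1).pow (a + 1)
  have hright := ((hasDerivAt_id y).const_add 1).pow (b + 1)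
  refine (hleft.mul hright).deriv.trans ?_
  simp only [id_eq, Nat.add_sub_cancel, Nat.cast_add, Nat.cast_one, Pi.pow_apply]
  ring

lemma iteratedDeriv_one_sub_pow_mul_one_add_pow (k α β : ℕ) (x : ℝ) :
    iteratedDeriv k (fun y : ℝ => (1 - y) ^ (α + k) * (1 + y) ^ (β + k)) x =
      (-1) ^ k * 2 ^ k * (k ! : ℝ) * (1 - x) ^ α * (1 + x) ^ β *
        jacobiSum k α β ((1 + x) / 2) := by
  induction k generalizing α β x with
  | zero => simp [jacobiSum, jacobiCoeff]
  | succ k ih =>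
    have ihα := ih (α + 1) β x
    have ihβ := ih α (β + 1) x
    have hrec := jacobiSum_succ k α β ((1 + x) / 2)
    rw [add_right_comm] at ihα ihβ
    rw [iteratedDeriv_succ', ← add_assoc, ← add_assoc, deriv_one_sub_pow_mul_one_add_pow,
      iteratedDeriv_fun_add (by fun_prop) (by fun_prop), iteratedDeriv_const_mul_field,
      iteratedDeriv_const_mul_field, ihα, ihβ, Nat.factorial_succ]
    push_cast
    linear_combination (2 * (-1) ^ k * 2 ^ k * (k ! : ℝ) * (1 - x) ^ α * (1 + x) ^ β) * hrec

lemma apply_eq_jacobiSum_of_isJacobi {J : ℕ → ℕ → ℕ → ℝ → ℝ} (hJ : IsJacobi J) (k α β : ℕ) {x : ℝ}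
    (hx : x ∈ Set.Ioo (-1 : ℝ) 1) : J k α β x = jacobiSum k α β ((1 + x) / 2) := by
  have hsub : 1 - x ≠ 0 := by linarith [hx.2]
  have hadd : 1 + x ≠ 0 := by linarith [hx.1]
  have hsign : ((-1 : ℝ) ^ k) * (-1) ^ k = 1 := by rw [← mul_pow]; norm_num
  rw [(hJ k α β).2 x hx, jacobiFormula, iteratedDeriv_one_sub_pow_mul_one_add_pow, zpow_neg,
    zpow_neg, zpow_natCast, zpow_natCast]
  field_simp
  linear_combination jacobiSum k α β ((1 + x) / 2) * hsign

/-! ### Ballot numbers -/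

/-- The ballot number `C(p, s) - C(p, s - 1)`, with the convention `C(p, -1) = 0`. -/
def ballotCoeff (p : ℕ) : ℕ → ℤ
  | 0 => 1
  | s + 1 => p.choose (s + 1) - p.choose s

lemma ballotCoeff_succ_succ (p s : ℕ) :
    ballotCoeff (p + 1) (s + 1) = ballotCoeff p (s + 1) + ballotCoeff p s := by
  cases s with
  | zero => simp [ballotCoeff]
  | succ s =>
    simp only [ballotCoeff, Nat.choose_succ_succ p (s + 1), Nat.choose_succ_succ p s]
    push_cast
    ring

lemma ballotCoeff_two_mul_add_one (q : ℕ) : ballotCoeff (2 * q + 1) (q + 1) = 0 := by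
  rw [ballotCoeff, Nat.choose_symm_half, sub_self]

lemma ballotCoeff_eq_factorial_div (m s : ℕ) :
    (ballotCoeff (m + 2 * s) s : ℝ) =
      (m + 2 * s)! * ((m : ℝ) + 1) / (s ! * (m + 1 + s)!) := by
  cases s with
  | zero => simp [ballotCoeff, Nat.factorial_succ]; field_simp
  | succ s =>
    have hchoose : ((m + 2 * (s + 1)).choose (s + 1) : ℝ) =
        (m + 2 * (s + 1))! / ((s + 1)! * (m + s + 1)!) := by
      rw [Nat.cast_choose ℝ (by omega)]; congr 4; omega
    have hchoose_pred : ((m + 2 * (s + 1)).choose s : ℝ) =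
        (m + 2 * (s + 1))! / (s ! * (m + s + 2)!) := by
      rw [Nat.cast_choose ℝ (by omega)]; congr 4; omega
    rw [ballotCoeff, show m + 1 + (s + 1) = m + s + 1 + 1 by omega]
    push_cast
    rw [hchoose, hchoose_pred, Nat.factorial_succ s, Nat.factorial_succ (m + s + 1)]
    push_cast
    field_simp
    ring

lemma two_mul_cos_mul_sin (x w : ℂ) :
    2 * Complex.cos w * Complex.sin x = Complex.sin (x + w) + Complex.sin (x - w) := by
  rw [Complex.sin_add, Complex.sin_sub]
  ring

lemma sum_range_half_mul_sin (f : ℕ → ℂ) (w : ℂ) (p : ℕ) :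
    ∑ s ∈ Finset.range ((p + 1) / 2 + 1), f s * Complex.sin ((p + 2 - 2 * s) * w) =
      ∑ s ∈ Finset.range (p / 2 + 2), f s * Complex.sin ((p + 2 - 2 * s) * w) := by
  rcases Nat.even_or_odd' p with ⟨q, rfl | rfl⟩
  · rw [show (2 * q + 1) / 2 = q by omega, show 2 * q / 2 = q by omega,
      Finset.sum_range_succ _ (q + 1), left_eq_add]
    push_cast
    rw [show ((2 * q + 2 - 2 * (q + 1)) * w : ℂ) = 0 by ring, Complex.sin_zero, mul_zero]
  · rw [show (2 * q + 1 + 1) / 2 + 1 = (2 * q + 1) / 2 + 2 by omega]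

lemma sum_ballotCoeff_mul_sin_extend (w : ℂ) (p : ℕ) :
    ∑ s ∈ Finset.range (p / 2 + 1), (ballotCoeff p s : ℂ) * Complex.sin ((p + 2 - 2 * s) * w) =
      ∑ s ∈ Finset.range (p / 2 + 2),
        (ballotCoeff p s : ℂ) * Complex.sin ((p + 2 - 2 * s) * w) := by
  rw [← sum_range_half_mul_sin]
  rcases Nat.even_or_odd' p with ⟨q, rfl | rfl⟩
  · rw [show (2 * q + 1) / 2 = 2 * q / 2 by omega]
  · rw [show (2 * q + 1 + 1) / 2 = q + 1 by omega, show (2 * q + 1) / 2 = q by omega,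
      Finset.sum_range_succ _ (q + 1), ballotCoeff_two_mul_add_one, Int.cast_zero, zero_mul,
      add_zero]

lemma sum_ballotCoeff_mul_sin (w : ℂ) (p : ℕ) :
    ∑ s ∈ Finset.range (p / 2 + 1), (ballotCoeff p s : ℂ) * Complex.sin ((p + 1 - 2 * s) * w) =
      (2 * Complex.cos w) ^ p * Complex.sin w := by
  induction p with
  | zero => simp [ballotCoeff]
  | succ p ih =>
    have product_to_sum (s : ℕ) : 2 * Complex.cos w * Complex.sin ((p + 1 - 2 * s) * w) =
        Complex.sin ((p + 2 - 2 * s) * w) + Complex.sin ((p + 2 - 2 * (s + 1 : ℕ)) * w) := by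
      rw [two_mul_cos_mul_sin]
      push_cast
      ring_nf
    have hcast (s : ℕ) : ((p + 1 : ℕ) + 1 - 2 * s : ℂ) = p + 2 - 2 * s := by push_cast; ring
    simp only [hcast]
    rw [sum_range_half_mul_sin, pow_succ', mul_assoc, ← ih, Finset.mul_sum]
    simp only [mul_left_comm _ (ballotCoeff p _ : ℂ), product_to_sum, mul_add,
      Finset.sum_add_distrib]
    rw [sum_ballotCoeff_mul_sin_extend, Finset.sum_range_succ' _ (p / 2 + 1),
      Finset.sum_range_succ' _ (p / 2 + 1), add_right_comm, ← Finset.sum_add_distrib]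
    congr 1
    refine Finset.sum_congr rfl fun s _ => ?_
    rw [ballotCoeff_succ_succ]
    push_cast
    ring

/-! ### Gegenbauer polynomials with integer parameter -/

open Polynomial in
/-- The multiple `lam! • C_l^{(lam + 1)}` of a Gegenbauer polynomial; this normalisation is free of
division. The terms with `l < 2 * j` vanish because of the binomial coefficient. -/
noncomputable def scaledGegenbauer (R : Type*) [CommRing R] (lam l : ℕ) : R[X] :=
  ∑ j ∈ Finset.range (l + 1),
    C ((-1) ^ j * ((l - j).choose j : R) * ((l - j + 1).ascFactorial lam : R)) *
      (2 * X) ^ (l - 2 * j)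

section Gegenbauer

open Polynomial

variable (R : Type*) [CommRing R]

lemma derivative_scaledGegenbauer (lam l : ℕ) :
    derivative (scaledGegenbauer R lam (l + 1)) = 2 * scaledGegenbauer R (lam + 1) l := by
  rw [scaledGegenbauer, Finset.sum_range_succ, Nat.choose_eq_zero_of_lt (by omega),
    Nat.cast_zero, mul_zero, zero_mul, C_0, zero_mul, add_zero, derivative_sum, scaledGegenbauer,
    Finset.mul_sum]
  refine Finset.sum_congr rfl fun j hj => ?_
  obtain ⟨i, rfl⟩ := Nat.exists_eq_add_of_le' (Finset.mem_range_succ_iff.mp hj)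
  have hchoose : (i.choose j * (i + 1) : R[X]) = (i + 1).choose j * (i + 1 - j : ℕ) := by
    exact_mod_cast congrArg (Nat.cast (R := R[X])) (Nat.choose_mul_succ_eq i j)
  have hasc : (i + 1).ascFactorial (lam + 1) = (i + 1) * (i + 1 + 1).ascFactorial lam := by
    rw [Nat.ascFactorial_succ, ← Nat.succ_ascFactorial]
  rw [derivative_C_mul, derivative_pow, show i + j + 1 - j = i + 1 by omega,
    show i + j - j = i by omega, show i + j + 1 - 2 * j = i + 1 - j by omega,
    show i + j - 2 * j = i + 1 - j - 1 by omega, hasc]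
  simp only [derivative_mul, derivative_ofNat, derivative_X, zero_mul, mul_one, zero_add, map_mul,
    map_pow, map_neg, map_one, map_natCast]
  push_cast
  linear_combination (-2 * (-1) ^ j * ((i + 1 + 1).ascFactorial lam : R[X]) *
    (2 * X) ^ (i + 1 - j - 1)) * hchoose

lemma iterate_derivative_scaledGegenbauer (i lam l : ℕ) :
    derivative^[i] (scaledGegenbauer R lam (l + i)) = 2 ^ i * scaledGegenbauer R (lam + i) l := by
  induction i generalizing lam with
  | zero => simp
  | succ i ih =>
    rw [Function.iterate_succ_apply, ← add_assoc, derivative_scaledGegenbauer,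
      ← map_ofNat C 2, iterate_derivative_C_mul, ih, map_ofNat, ← add_assoc, add_right_comm]
    ring

lemma scaledGegenbauer_zero_add_two (l : ℕ) :
    scaledGegenbauer R 0 (l + 2) =
      2 * X * scaledGegenbauer R 0 (l + 1) - scaledGegenbauer R 0 l := by
  have term_eq (j : ℕ) (hj : j ≤ l) :
      (C ((-1 : R) ^ (j + 1) * ((l + 2 - (j + 1)).choose (j + 1) : R)) *
        (2 * X) ^ (l + 2 - 2 * (j + 1)) : R[X]) =
      2 * X * (C ((-1) ^ (j + 1) * ((l + 1 - (j + 1)).choose (j + 1) : R)) *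
        (2 * X) ^ (l + 1 - 2 * (j + 1))) -
      C ((-1) ^ j * ((l - j).choose j : R)) * (2 * X) ^ (l - 2 * j) := by
    obtain ⟨i, rfl⟩ := Nat.exists_eq_add_of_le' hj
    rw [show i + j + 2 - (j + 1) = i + 1 by omega, show i + j + 1 - (j + 1) = i by omega,
      show i + j - j = i by omega, show i + j + 2 - 2 * (j + 1) = i + j - 2 * j by omega,
      Nat.choose_succ_succ]
    rcases lt_or_ge i (j + 1) with h | h
    · simp [Nat.choose_eq_zero_of_lt h, pow_succ]
    · rw [show i + j - 2 * j = i + j + 1 - 2 * (j + 1) + 1 by omega, pow_succ' (2 * X : R[X])]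
      simp only [Nat.cast_add, map_mul, map_add, pow_succ, map_neg, map_one]
      ring
  have last_eq_zero : ((l + 2 - (l + 2)).choose (l + 2) : R) = 0 := by simp
  simp only [scaledGegenbauer, Nat.ascFactorial_zero, Nat.cast_one, mul_one]
  rw [Finset.sum_range_succ _ (l + 2), last_eq_zero, mul_zero, C_0, zero_mul, add_zero,
    Finset.sum_range_succ', Finset.sum_range_succ' _ (l + 1), mul_add, Finset.mul_sum,
    add_sub_right_comm, ← Finset.sum_sub_distrib]
  congr 1
  · exact Finset.sum_congr rfl fun j hj => term_eq j (Finset.mem_range_succ_iff.mp hj)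
  · simp [pow_succ']

lemma chebyshev_U_eq_scaledGegenbauer (l : ℕ) :
    Chebyshev.U R (l : ℤ) = scaledGegenbauer R 0 l := by
  induction l using Nat.twoStepInduction with
  | zero => simp [scaledGegenbauer]
  | one => simp [scaledGegenbauer, Finset.sum_range_succ]
  | more l ih ih_succ =>
    rw [scaledGegenbauer_zero_add_two, ← ih, ← ih_succ]
    exact_mod_cast Chebyshev.U_add_two R l

lemma iterate_derivative_chebyshev_T (i l : ℕ) :
    derivative^[i + 1] (Chebyshev.T R ((l + i + 1 : ℕ) : ℤ)) =
      C (((l + i + 1 : ℕ) : R) * 2 ^ i) * scaledGegenbauer R i l := by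
  have hderiv : derivative (Chebyshev.T R ((l + i + 1 : ℕ) : ℤ)) =
      C ((l + i + 1 : ℕ) : R) * scaledGegenbauer R 0 (l + i) := by
    rw [Chebyshev.T_derivative_eq_U, ← chebyshev_U_eq_scaledGegenbauer]
    push_cast
    simp
  rw [Function.iterate_succ_apply, hderiv, iterate_derivative_C_mul,
    iterate_derivative_scaledGegenbauer, zero_add, C_mul, mul_assoc, map_pow, map_ofNat]

variable {R}

lemma eval_scaledGegenbauer (lam l : ℕ) (x : R) :
    (scaledGegenbauer R lam l).eval x = ∑ j ∈ Finset.range (l / 2 + 1),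
      (-1) ^ j * ((l - j).choose j : R) * ((l - j + 1).ascFactorial lam : R) *
        (2 * x) ^ (l - 2 * j) := by
  have hsubset : Finset.range (l / 2 + 1) ⊆ Finset.range (l + 1) :=
    Finset.range_subset_range.mpr (by omega)
  rw [scaledGegenbauer, eval_finsetSum, ← Finset.sum_subset hsubset fun j _ hj => ?_]
  · simp
  · rw [Nat.choose_eq_zero_of_lt (by rw [Finset.mem_range] at hj; omega)]
    simp

end Gegenbauer

/-! ### Summation of the spherical modes of a fixed degree -/

/-- The radial factor of the `(m, k)` spherical mode at radius `r`, where `c = cos r`. -/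
noncomputable def modeCoeff (α m k : ℕ) (c : ℝ) : ℝ :=
  ((m : ℝ) + 1) * ((k + m + α + 1).choose α : ℝ) * c ^ m * jacobiSum k α (m + 1) (c ^ 2)

lemma factorial_mul_choose_mul_jacobiCoeff (α m s j : ℕ) :
    (α ! : ℝ) * (((m : ℝ) + 1) * ((s + j + m + α + 1).choose α : ℝ) *
        jacobiCoeff (s + j) α (m + 1) s) =
      (-1) ^ j * ((j + (m + 2 * s)).choose j : ℝ) *
        ((j + (m + 2 * s) + 1).ascFactorial (α + 1) : ℝ) * ballotCoeff (m + 2 * s) s := by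
  have hasc : ((j + (m + 2 * s) + 1).ascFactorial (α + 1) : ℝ) =
      (j + (m + 2 * s) + (α + 1))! / (j + (m + 2 * s))! := by
    rw [eq_div_iff (by positivity), mul_comm]
    exact_mod_cast Nat.factorial_mul_ascFactorial _ _
  have hsign : (-1 : ℝ) ^ (s + j + s) = (-1) ^ j := by
    rw [show s + j + s = j + 2 * s by omega, pow_add, pow_mul, neg_one_sq, one_pow, mul_one]
  rw [jacobiCoeff, hsign, show s + j + m + α + 1 = α + (s + j + m + 1) by omega,
    show s + j + (m + 1) = (m + 1 + s) + j by omega,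
    show s + j + α + (m + 1) + s = s + (s + j + α + (m + 1)) by omega, ballotCoeff_eq_factorial_div]
  rw [hasc, Nat.cast_add_choose, Nat.cast_add_choose, Nat.cast_add_choose, Nat.cast_add_choose,
    show α + (s + j + m + 1) = s + j + α + (m + 1) by omega,
    show s + j + m + 1 = m + 1 + s + j by omega,
    show s + (s + j + α + (m + 1)) = j + (m + 2 * s) + (α + 1) by omega]
  field_simp

/-- The common summand, up to a factor `α!`, of the expansion of the degree-`l` spherical modes via
their Jacobi polynomials, and of `scaledGegenbauer` via ballot numbers. -/
noncomputable def modeExpansionTerm (α l : ℕ) (c : ℝ) (w : ℂ) (s j : ℕ) : ℂ :=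
  (-1) ^ j * ((l - j).choose j : ℂ) * ((l - j + 1).ascFactorial (α + 1) : ℂ) * c ^ (l - 2 * j) *
    (ballotCoeff (l - 2 * j) s * Complex.sin (((l - 2 * j : ℕ) + 1 - 2 * s) * w))

lemma factorial_mul_modeCoeff_mul_sin (α : ℕ) {l k : ℕ} (hk : 2 * k ≤ l) (c : ℝ) (w : ℂ) :
    (α ! : ℂ) * ((modeCoeff α (l - 2 * k) k c : ℂ) * Complex.sin (((l - 2 * k : ℕ) + 1) * w)) =
      ∑ s ∈ Finset.range (k + 1), modeExpansionTerm α l c w s (k - s) := by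
  simp only [modeCoeff, jacobiSum, Finset.mul_sum, Complex.ofReal_sum, Finset.sum_mul]
  refine Finset.sum_congr rfl fun s hs => ?_
  obtain ⟨j, rfl⟩ := Nat.exists_eq_add_of_le (Finset.mem_range_succ_iff.mp hs)
  obtain ⟨m, rfl⟩ := Nat.exists_eq_add_of_le' hk
  have hcoeff := congrArg ((↑) : ℝ → ℂ) (factorial_mul_choose_mul_jacobiCoeff α m s j)
  rw [modeExpansionTerm, show m + 2 * (s + j) - 2 * (s + j) = m by omega,
    show s + j - s = j by omega, show m + 2 * (s + j) - j = j + (m + 2 * s) by omega,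
    show m + 2 * (s + j) - 2 * j = m + 2 * s by omega,
    show (((m + 2 * s : ℕ) + 1 - 2 * s) * w : ℂ) = (m + 1) * w by push_cast; ring]
  push_cast at hcoeff ⊢
  linear_combination ((c : ℂ) ^ (m + 2 * s) * Complex.sin ((m + 1) * w)) * hcoeff

lemma sum_modeExpansionTerm (α : ℕ) {l j : ℕ} (hj : 2 * j ≤ l) (c : ℝ) (w : ℂ) :
    ∑ s ∈ Finset.range (l / 2 + 1 - j), modeExpansionTerm α l c w s j =
      Complex.sin w * ((-1) ^ j * ((l - j).choose j : ℂ) *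
        ((l - j + 1).ascFactorial (α + 1) : ℂ) * (2 * (c * Complex.cos w)) ^ (l - 2 * j)) := by
  simp only [modeExpansionTerm]
  rw [← Finset.mul_sum, show l / 2 + 1 - j = (l - 2 * j) / 2 + 1 by omega, sum_ballotCoeff_mul_sin,
    mul_left_comm 2 (c : ℂ), mul_pow (c : ℂ)]
  ring

lemma factorial_mul_sum_modeCoeff_mul_sin (α l : ℕ) (c : ℝ) (w : ℂ) :
    (α ! : ℂ) * ∑ k ∈ Finset.range (l / 2 + 1),
        (modeCoeff α (l - 2 * k) k c : ℂ) * Complex.sin (((l - 2 * k : ℕ) + 1) * w) =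
      Complex.sin w * (scaledGegenbauer ℂ (α + 1) l).eval (c * Complex.cos w) := by
  have two_mul_le {i : ℕ} (hi : i ∈ Finset.range (l / 2 + 1)) : 2 * i ≤ l := by
    rw [Finset.mem_range] at hi
    omega
  calc _ = ∑ k ∈ Finset.range (l / 2 + 1), ∑ s ∈ Finset.range (k + 1),
          modeExpansionTerm α l c w s (k - s) := by
        rw [Finset.mul_sum]
        exact Finset.sum_congr rfl fun k hk =>
          factorial_mul_modeCoeff_mul_sin α (two_mul_le hk) c w
    _ = ∑ j ∈ Finset.range (l / 2 + 1), ∑ s ∈ Finset.range (l / 2 + 1 - j),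
          modeExpansionTerm α l c w s j := by
        rw [Finset.sum_range_diag_flip]
        refine Finset.sum_comm' fun s j => ?_
        simp only [Finset.mem_range]
        omega
    _ = _ := by
        rw [eval_scaledGegenbauer, Finset.mul_sum]
        exact Finset.sum_congr rfl fun j hj => sum_modeExpansionTerm α (two_mul_le hj) c w

open Polynomial in
lemma sum_modeCoeff_mul_sin (α l : ℕ) (c : ℝ) (w : ℂ) :
    ((l + α + 2 : ℕ) : ℂ) * ∑ k ∈ Finset.range (l / 2 + 1),
        (modeCoeff α (l - 2 * k) k c : ℂ) * Complex.sin (((l - 2 * k : ℕ) + 1) * w) =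
      (2 ^ (α + 1) * (α ! : ℂ))⁻¹ * (Complex.sin w *
        (derivative^[α + 2] (Chebyshev.T ℂ ((l + α + 2 : ℕ) : ℤ))).eval (c * Complex.cos w)) := by
  have hα : (α ! : ℂ) ≠ 0 := by exact_mod_cast α.factorial_ne_zero
  have hsum := factorial_mul_sum_modeCoeff_mul_sin α l c w
  rw [show α + 2 = α + 1 + 1 by omega, show l + α + 2 = l + (α + 1) + 1 by omega,
    iterate_derivative_chebyshev_T, eval_mul, eval_C]
  field_simp
  linear_combination ((l + (α + 1) + 1 : ℕ) : ℂ) * hsum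

/-! ### The complex inverse cosine -/

lemma complexCos_re (A : ℂ) : (Complex.cos A).re = Real.cos A.re * Real.cosh A.im := by
  rw [Complex.cos_eq]
  simp [← Complex.ofReal_cos, ← Complex.ofReal_sin, ← Complex.ofReal_cosh, ← Complex.ofReal_sinh]

lemma complexCos_im (A : ℂ) : (Complex.cos A).im = -(Real.sin A.re * Real.sinh A.im) := by
  rw [Complex.cos_eq]
  simp [← Complex.ofReal_cos, ← Complex.ofReal_sin, ← Complex.ofReal_cosh, ← Complex.ofReal_sinh]

lemma complexSin_re (A : ℂ) : (Complex.sin A).re = Real.sin A.re * Real.cosh A.im := by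
  rw [Complex.sin_eq]
  simp [← Complex.ofReal_cos, ← Complex.ofReal_sin, ← Complex.ofReal_cosh, ← Complex.ofReal_sinh]

lemma complexSin_im (A : ℂ) : (Complex.sin A).im = Real.cos A.re * Real.sinh A.im := by
  rw [Complex.sin_eq]
  simp [← Complex.ofReal_cos, ← Complex.ofReal_sin, ← Complex.ofReal_cosh, ← Complex.ofReal_sinh]

lemma norm_complexSin_sq (A : ℂ) :
    ‖Complex.sin A‖ ^ 2 = Real.sin A.re ^ 2 + Real.sinh A.im ^ 2 := by
  rw [Complex.sq_norm, Complex.normSq_apply, complexSin_re, complexSin_im]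
  linear_combination Real.sinh A.im ^ 2 * Real.sin_sq_add_cos_sq A.re +
    Real.sin A.re ^ 2 * Real.cosh_sq A.im

lemma norm_complexCos_add_one (A : ℂ) :
    ‖Complex.cos A + 1‖ = Real.cosh A.im + Real.cos A.re := by
  have hnonneg : 0 ≤ Real.cosh A.im + Real.cos A.re := by
    linarith [Real.one_le_cosh A.im, Real.neg_one_le_cos A.re]
  rw [← sq_eq_sq₀ (norm_nonneg _) hnonneg, Complex.sq_norm, Complex.normSq_apply]
  simp only [Complex.add_re, Complex.add_im, Complex.one_re, Complex.one_im, complexCos_re,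
    complexCos_im]
  linear_combination Real.sinh A.im ^ 2 * Real.sin_sq_add_cos_sq A.re +
    (Real.cos A.re ^ 2 - 1) * Real.cosh_sq A.im

lemma norm_complexCos_sub_one (A : ℂ) :
    ‖Complex.cos A - 1‖ = Real.cosh A.im - Real.cos A.re := by
  have hneg := norm_complexCos_add_one (A + π)
  rw [Complex.cos_add_pi, neg_add_eq_sub, norm_sub_rev] at hneg
  simpa [sub_eq_add_neg] using hneg

/-- Half the difference of the distances of `z` to the foci `∓1`. As `cos` maps vertical lines to
confocal hyperbolas, this is the cosine of the real part of every preimage of `z` under `cos`. -/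
noncomputable def focalCos (z : ℂ) : ℝ := (‖z + 1‖ - ‖z - 1‖) / 2

lemma focalCos_cos (A : ℂ) : focalCos (Complex.cos A) = Real.cos A.re := by
  rw [focalCos, norm_complexCos_add_one, norm_complexCos_sub_one]
  ring

lemma focalCos_ofReal (u : ℝ) : focalCos u = (|u + 1| - |u - 1|) / 2 := by
  simp only [focalCos, ← Real.norm_eq_abs, ← Complex.norm_real, Complex.ofReal_add,
    Complex.ofReal_sub, Complex.ofReal_one]

lemma abs_focalCos_sub_le (z x : ℂ) : |focalCos z - focalCos x| ≤ ‖z - x‖ := by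
  have hplus := abs_norm_sub_norm_le (z + 1) (x + 1)
  have hminus := abs_norm_sub_norm_le (z - 1) (x - 1)
  rw [add_sub_add_right_eq_sub] at hplus
  rw [sub_sub_sub_cancel_right] at hminus
  rw [abs_le] at hplus hminus ⊢
  simp only [focalCos]
  constructor <;> linarith

/-- The plane cut along `(-∞, -1]` and `[1, ∞)`. -/
def cutPlane : Set ℂ := {z | |focalCos z| < 1}

lemma isOpen_cutPlane : IsOpen cutPlane := by
  unfold cutPlane focalCos
  exact isOpen_lt (by fun_prop) continuous_const

lemma ofReal_mem_cutPlane {u : ℝ} (hu : u ∈ Ioo (-1) 1) : (u : ℂ) ∈ cutPlane := by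
  change |focalCos u| < 1
  rw [focalCos_ofReal, abs_of_pos (by linarith [hu.1] : 0 < u + 1),
    abs_of_neg (by linarith [hu.2] : u - 1 < 0), abs_lt]
  constructor <;> linarith [hu.1, hu.2]

lemma mem_cutPlane_of_im_ne_zero {z : ℂ} (hz : z.im ≠ 0) : z ∈ cutPlane := by
  have hray : ¬SameRay ℝ (z + 1) (z - 1) := by
    intro h
    obtain ⟨ρ, -, hρ⟩ := h.exists_nonneg_left fun h0 => hz (by simpa using congrArg Complex.im h0)
    have him := congrArg Complex.im hρ
    have hre := congrArg Complex.re hρ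
    simp only [Complex.smul_im, Complex.smul_re, Complex.add_im, Complex.sub_im, Complex.add_re,
      Complex.sub_re, Complex.one_im, Complex.one_re, add_zero, sub_zero, smul_eq_mul] at him hre
    rw [mul_eq_right₀ hz] at him
    rw [him] at hre
    linarith
  have hlt := abs_lt_norm_sub_of_not_sameRay hray
  rw [show z + 1 - (z - 1) = 2 by ring, Complex.norm_ofNat] at hlt
  change |(‖z + 1‖ - ‖z - 1‖) / 2| < 1
  rw [abs_div, abs_two]
  linarith

lemma one_le_abs_focalCos_ofReal {u : ℝ} (hu : 1 ≤ u ^ 2) : 1 ≤ |focalCos u| := by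
  rw [focalCos_ofReal]
  rcases le_or_gt 0 u with h | h
  · have hone : 1 ≤ u := by nlinarith
    rw [abs_of_nonneg (by linarith : 0 ≤ u + 1), abs_of_nonneg (by linarith : 0 ≤ u - 1),
      show (u + 1 - (u - 1)) / 2 = 1 by ring, abs_one]
  · have hone : u ≤ -1 := by nlinarith
    rw [abs_of_nonpos (by linarith : u + 1 ≤ 0), abs_of_nonpos (by linarith : u - 1 ≤ 0),
      show (-(u + 1) - -(u - 1)) / 2 = -1 by ring, abs_neg, abs_one]

lemma one_sub_sq_mem_slitPlane {z : ℂ} (hz : z ∈ cutPlane) : 1 - z ^ 2 ∈ Complex.slitPlane := by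
  rw [Complex.mem_slitPlane_iff_not_le_zero, Complex.le_def]
  rintro ⟨hre, him⟩
  simp only [pow_two, Complex.sub_re, Complex.mul_re, Complex.sub_im, Complex.mul_im,
    Complex.one_re, Complex.one_im, Complex.zero_re, Complex.zero_im] at hre him
  have hz_re : z.re ≠ 0 := by
    intro h
    rw [h] at hre
    nlinarith [sq_nonneg z.im]
  have hz_im : z.im = 0 := by
    refine (mul_eq_zero.mp (?_ : z.re * z.im = 0)).resolve_left hz_re
    linarith
  have hz_real : z = (z.re : ℂ) := Complex.ext rfl hz_im
  rw [hz_real] at hz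
  exact (one_le_abs_focalCos_ofReal (by nlinarith)).not_gt hz

/-- The branch of `√(1 - z²)` on `cutPlane` which is positive on `(-1, 1)`. -/
noncomputable def sqrtOneSubSq (z : ℂ) : ℂ := Complex.exp (Complex.log (1 - z ^ 2) / 2)

/-- The branch of the inverse cosine on `cutPlane` with real part in `(0, π)`. -/
noncomputable def complexArccos (z : ℂ) : ℂ := -I * Complex.log (z + I * sqrtOneSubSq z)

section CutPlane

variable {z : ℂ}

lemma sqrtOneSubSq_sq (hz : z ∈ cutPlane) : sqrtOneSubSq z ^ 2 = 1 - z ^ 2 := by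
  rw [sqrtOneSubSq, ← Complex.exp_nat_mul, Nat.cast_two, mul_div_cancel₀ _ two_ne_zero,
    Complex.exp_log (Complex.slitPlane_ne_zero (one_sub_sq_mem_slitPlane hz))]

lemma sqrtOneSubSq_re_pos (hz : z ∈ cutPlane) : 0 < (sqrtOneSubSq z).re := by
  have harg_lt : Complex.arg (1 - z ^ 2) < π :=
    (Complex.arg_le_pi _).lt_of_ne
      (Complex.mem_slitPlane_iff_arg.mp (one_sub_sq_mem_slitPlane hz)).1
  have harg_gt := Complex.neg_pi_lt_arg (1 - z ^ 2)
  have him : (Complex.log (1 - z ^ 2) / 2).im = Complex.arg (1 - z ^ 2) / 2 := by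
    rw [Complex.div_ofNat_im, Complex.log_im]
  rw [sqrtOneSubSq, Complex.exp_re, him]
  exact mul_pos (Real.exp_pos _) (Real.cos_pos_of_mem_Ioo ⟨by linarith, by linarith⟩)

lemma sqrtOneSubSq_ne_zero (hz : z ∈ cutPlane) : sqrtOneSubSq z ≠ 0 := fun h =>
  (sqrtOneSubSq_re_pos hz).ne' (by rw [h, Complex.zero_re])

lemma add_mul_sub_sqrtOneSubSq (hz : z ∈ cutPlane) :
    (z + I * sqrtOneSubSq z) * (z - I * sqrtOneSubSq z) = 1 := by
  linear_combination sqrtOneSubSq_sq hz - sqrtOneSubSq z ^ 2 * Complex.I_sq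

lemma add_sqrtOneSubSq_mem_slitPlane (hz : z ∈ cutPlane) :
    z + I * sqrtOneSubSq z ∈ Complex.slitPlane := by
  refine Complex.mem_slitPlane_iff.mpr (Or.inr fun him => ?_)
  have hprod := add_mul_sub_sqrtOneSubSq hz
  have hpos := sqrtOneSubSq_re_pos hz
  have hdiff : (z + I * sqrtOneSubSq z).im - (z - I * sqrtOneSubSq z).im =
      2 * (sqrtOneSubSq z).re := by
    simp only [Complex.add_im, Complex.sub_im, Complex.I_mul_im]
    ring
  rw [him] at hdiff
  have hprod_re := congrArg Complex.re hprod
  have hprod_im := congrArg Complex.im hprod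
  rw [Complex.mul_re, him, zero_mul, sub_zero, Complex.one_re] at hprod_re
  rw [Complex.mul_im, him, zero_mul, add_zero, Complex.one_im] at hprod_im
  rcases mul_eq_zero.mp hprod_im with h | h
  · rw [h, zero_mul] at hprod_re
    exact zero_ne_one hprod_re
  · linarith

lemma exp_complexArccos_mul_I (hz : z ∈ cutPlane) :
    Complex.exp (complexArccos z * I) = z + I * sqrtOneSubSq z := by
  rw [complexArccos, mul_right_comm, neg_mul, Complex.I_mul_I, neg_neg, one_mul,
    Complex.exp_log (Complex.slitPlane_ne_zero (add_sqrtOneSubSq_mem_slitPlane hz))]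

lemma exp_neg_complexArccos_mul_I (hz : z ∈ cutPlane) :
    Complex.exp (-complexArccos z * I) = z - I * sqrtOneSubSq z := by
  rw [neg_mul, Complex.exp_neg, exp_complexArccos_mul_I hz]
  exact inv_eq_of_mul_eq_one_right (add_mul_sub_sqrtOneSubSq hz)

lemma cos_complexArccos (hz : z ∈ cutPlane) : Complex.cos (complexArccos z) = z := by
  rw [Complex.cos, exp_complexArccos_mul_I hz, exp_neg_complexArccos_mul_I hz]
  ring

lemma sin_complexArccos (hz : z ∈ cutPlane) : Complex.sin (complexArccos z) = sqrtOneSubSq z := by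
  rw [Complex.sin, exp_complexArccos_mul_I hz, exp_neg_complexArccos_mul_I hz]
  linear_combination -sqrtOneSubSq z * Complex.I_sq

lemma complexArccos_re_mem_Ioo (hz : z ∈ cutPlane) : (complexArccos z).re ∈ Ioo 0 π := by
  have hre : (complexArccos z).re = Complex.arg (z + I * sqrtOneSubSq z) := by
    rw [complexArccos, neg_mul, Complex.neg_re, Complex.I_mul_re, neg_neg, Complex.log_im]
  have hlt_pi : (complexArccos z).re < π := hre ▸ (Complex.arg_le_pi _).lt_of_ne
    (Complex.mem_slitPlane_iff_arg.mp (add_sqrtOneSubSq_mem_slitPlane hz)).1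
  have hneg_pi_lt : -π < (complexArccos z).re := hre ▸ Complex.neg_pi_lt_arg _
  have hsin : 0 < Real.sin (complexArccos z).re := by
    refine pos_of_mul_pos_left ?_ (Real.cosh_pos (complexArccos z).im).le
    rw [← complexSin_re, sin_complexArccos hz]
    exact sqrtOneSubSq_re_pos hz
  refine ⟨lt_of_not_ge fun hle => hsin.not_ge ?_, hlt_pi⟩
  exact Real.sin_nonpos_of_nonpos_of_neg_pi_le hle hneg_pi_lt.le

lemma cos_complexArccos_re (hz : z ∈ cutPlane) : Real.cos (complexArccos z).re = focalCos z := by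
  rw [← focalCos_cos, cos_complexArccos hz]

lemma hasDerivAt_complexArccos (hz : z ∈ cutPlane) :
    HasDerivAt complexArccos (-(sqrtOneSubSq z)⁻¹) z := by
  have hsqrt : ContinuousAt sqrtOneSubSq z := by
    have hlog : ContinuousAt (fun y : ℂ => Complex.log (1 - y ^ 2)) z :=
      ContinuousAt.clog (by fun_prop) (one_sub_sq_mem_slitPlane hz)
    exact (hlog.div_const 2).cexp
  have hcont : ContinuousAt complexArccos z := by
    have hlog : ContinuousAt (fun y : ℂ => Complex.log (y + I * sqrtOneSubSq y)) z :=
      ContinuousAt.clog (by fun_prop) (add_sqrtOneSubSq_mem_slitPlane hz)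
    exact hlog.const_mul (-I)
  have hcos := Complex.hasDerivAt_cos (complexArccos z)
  rw [sin_complexArccos hz] at hcos
  rw [← inv_neg]
  refine hcos.of_local_left_inverse hcont (neg_ne_zero.mpr (sqrtOneSubSq_ne_zero hz)) ?_
  filter_upwards [isOpen_cutPlane.mem_nhds hz] with y hy using cos_complexArccos hy

lemma hasDerivAt_sqrtOneSubSq (hz : z ∈ cutPlane) :
    HasDerivAt sqrtOneSubSq (-z / sqrtOneSubSq z) z := by
  have hsin := (Complex.hasDerivAt_sin (complexArccos z)).comp z (hasDerivAt_complexArccos hz)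
  rw [cos_complexArccos hz, mul_neg, ← div_eq_mul_inv, ← neg_div] at hsin
  refine hsin.congr_of_eventuallyEq ?_
  filter_upwards [isOpen_cutPlane.mem_nhds hz] with y hy using (sin_complexArccos hy).symm

lemma sqrtOneSubSq_ofReal {u : ℝ} (hu : u ∈ Ioo (-1) 1) :
    sqrtOneSubSq u = (√(1 - u ^ 2) : ℝ) := by
  have hpos : 0 < 1 - u ^ 2 := by nlinarith [hu.1, hu.2]
  rw [Real.sqrt_eq_rpow, Real.rpow_def_of_pos hpos, Complex.ofReal_exp, Complex.ofReal_mul,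
    Complex.ofReal_log hpos.le, sqrtOneSubSq]
  push_cast
  ring_nf

end CutPlane

lemma complexArccos_ofReal {u : ℝ} (hu : u ∈ Ioo (-1) 1) :
    complexArccos u = (Real.arccos u : ℝ) := by
  have hexp : (u : ℂ) + I * ((√(1 - u ^ 2) : ℝ) : ℂ) = Complex.exp ((Real.arccos u : ℝ) * I) := by
    rw [Complex.exp_mul_I, ← Complex.ofReal_cos, ← Complex.ofReal_sin,
      Real.cos_arccos hu.1.le hu.2.le, Real.sin_arccos, mul_comm I]
  rw [complexArccos, sqrtOneSubSq_ofReal hu, hexp, Complex.log_exp]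
  · linear_combination -(Real.arccos u : ℂ) * Complex.I_sq
  · simpa using (neg_lt_zero.mpr Real.pi_pos).trans_le (Real.arccos_nonneg u)
  · simpa using Real.arccos_le_pi u

lemma norm_complexArccos_le {z : ℂ} (hz : z ∈ cutPlane) :
    ‖complexArccos z‖ ≤ π + ‖sqrtOneSubSq z‖ := by
  have hre := complexArccos_re_mem_Ioo hz
  have him : |(complexArccos z).im| ≤ ‖sqrtOneSubSq z‖ := by
    rw [← sin_complexArccos hz]
    calc |(complexArccos z).im| ≤ |Real.sinh (complexArccos z).im| := by
          rw [Real.abs_sinh]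
          exact Real.self_le_sinh_iff.mpr (abs_nonneg _)
      _ ≤ ‖Complex.sin (complexArccos z)‖ := by
          refine abs_le_of_sq_le_sq ?_ (norm_nonneg _)
          rw [norm_complexSin_sq]
          exact le_add_of_nonneg_left (sq_nonneg _)
  have hnorm := Complex.norm_le_abs_re_add_abs_im (complexArccos z)
  rw [abs_of_pos hre.1] at hnorm
  linarith [hre.2]

lemma one_sub_focalCos_sq_le {z : ℂ} (hz : z ∈ cutPlane) :
    1 - focalCos z ^ 2 ≤ ‖sqrtOneSubSq z‖ ^ 2 := by
  rw [← sin_complexArccos hz, norm_complexSin_sq, ← cos_complexArccos_re hz,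
    ← Real.sin_sq_add_cos_sq (complexArccos z).re, add_sub_cancel_right]
  exact le_add_of_nonneg_right (sq_nonneg _)

lemma norm_complexArccos_sq_sub_le {σ μ : ℝ} (hσ : 0 < σ) (hμ : μ < 1) (hσμ : σ ^ 2 ≤ 1 - μ ^ 2)
    {x z : ℂ} (hball : ∀ y ∈ Metric.closedBall x ‖z - x‖, |focalCos y| ≤ μ) :
    ‖complexArccos z ^ 2 - complexArccos x ^ 2‖ ≤ 2 * (π / σ + 1) * ‖z - x‖ := by
  have hcut (y) (hy : y ∈ Metric.closedBall x ‖z - x‖) : y ∈ cutPlane := (hball y hy).trans_lt hμ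
  refine (convex_closedBall x ‖z - x‖).norm_image_sub_le_of_norm_hasDerivWithin_le
    (f := fun y => complexArccos y ^ 2)
    (f' := fun y => 2 * complexArccos y * -(sqrtOneSubSq y)⁻¹) (fun y hy => ?_) (fun y hy => ?_)
    (Metric.mem_closedBall_self (norm_nonneg _)) (by simp [dist_eq_norm])
  · simpa using ((hasDerivAt_complexArccos (hcut y hy)).fun_pow 2).hasDerivWithinAt
  · have hσ_le : σ ≤ ‖sqrtOneSubSq y‖ := by
      refine abs_le_of_sq_le_sq' ?_ (norm_nonneg _) |>.2
      have hfocal := abs_le.mp (hball y hy)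
      linarith [one_sub_focalCos_sq_le (hcut y hy), sq_le_sq' hfocal.1 hfocal.2]
    have hpos : 0 < ‖sqrtOneSubSq y‖ := hσ.trans_le hσ_le
    have hpi : π ≤ π / σ * ‖sqrtOneSubSq y‖ := by
      rw [div_mul_eq_mul_div, le_div_iff₀ hσ]
      exact mul_le_mul_of_nonneg_left hσ_le Real.pi_pos.le
    rw [norm_mul, norm_mul, norm_neg, norm_inv, ← div_eq_mul_inv, div_le_iff₀ hpos,
      Complex.norm_ofNat]
    nlinarith [norm_complexArccos_le (hcut y hy)]

/-! ### Growth of the phase along the shifted contour -/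

lemma le_of_hasDerivAt_nonneg {f f' : ℝ → ℝ} {p q : ℝ} (hpq : p ≤ q)
    (hderiv : ∀ s ∈ Icc p q, HasDerivAt f (f' s) s) (hnonneg : ∀ s ∈ Icc p q, 0 ≤ f' s) :
    f p ≤ f q :=
  monotoneOn_of_hasDerivWithinAt_nonneg (convex_Icc p q)
    (fun s hs => (hderiv s hs).continuousAt.continuousWithinAt)
    (fun s hs => (hderiv s (interior_subset hs)).hasDerivWithinAt)
    (fun s hs => hnonneg s (interior_subset hs)) (left_mem_Icc.mpr hpq) (right_mem_Icc.mpr hpq) hpq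

lemma sinh_le_mul_cosh {s : ℝ} (hs : 0 ≤ s) : Real.sinh s ≤ s * Real.cosh s := by
  have hderiv (x : ℝ) :
      HasDerivAt (fun s => s * Real.cosh s - Real.sinh s) (x * Real.sinh x) x :=
    (((hasDerivAt_id x).mul (Real.hasDerivAt_cosh x)).sub (Real.hasDerivAt_sinh x)).congr_deriv
      (by simp)
  have hmono := le_of_hasDerivAt_nonneg hs (fun x _ => hderiv x)
    fun x hx => mul_nonneg hx.1 (Real.sinh_nonneg_iff.mpr hx.1)
  simp only [zero_mul, Real.sinh_zero, sub_zero] at hmono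
  linarith

lemma mul_cosh_le_one_add_mul_sinh (y : ℝ) : y * Real.cosh y ≤ (1 + y) * Real.sinh y := by
  have hexp : Real.exp y = Real.exp (2 * y) * Real.exp (-y) := by rw [← Real.exp_add]; ring_nf
  rw [Real.cosh_eq, Real.sinh_eq, hexp]
  nlinarith [Real.add_one_le_exp (2 * y), Real.exp_pos (-y)]

lemma sinh_sub_sinh_le {b y : ℝ} (hb : 0 ≤ b) (hby : b ≤ y) :
    Real.sinh y - Real.sinh b ≤ (y - b) * Real.cosh y := by
  have hderiv (x : ℝ) : HasDerivAt (fun s => s * Real.cosh y - Real.sinh s)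
      (Real.cosh y - Real.cosh x) x :=
    (((hasDerivAt_id x).mul_const (Real.cosh y)).sub (Real.hasDerivAt_sinh x)).congr_deriv
      (by simp)
  have hmono := le_of_hasDerivAt_nonneg hby (fun x _ => hderiv x) fun x hx =>
    sub_nonneg.mpr <| Real.cosh_le_cosh.mpr <| by
      rw [abs_of_nonneg (hb.trans hx.1), abs_of_nonneg (hb.trans hby)]
      exact hx.2
  linarith

lemma le_sq_sub_sq_of_sinh_le {c b y : ℝ} (hc : c < 1) (hb : 0 ≤ b) (hby : b ≤ y)
    (hsinh : Real.sinh b ≤ c * Real.sinh y) :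
    (1 - c) * (y ^ 2 / (1 + y)) ≤ y ^ 2 - b ^ 2 := by
  have hy : 0 ≤ y := hb.trans hby
  have hgap : (1 - c) * (y / (1 + y)) ≤ y - b := by
    rw [mul_div_assoc', div_le_iff₀ (by linarith)]
    refine le_of_mul_le_mul_right ?_ (Real.cosh_pos y)
    calc (1 - c) * y * Real.cosh y = (1 - c) * (y * Real.cosh y) := mul_assoc _ _ _
      _ ≤ (1 - c) * ((1 + y) * Real.sinh y) :=
          mul_le_mul_of_nonneg_left (mul_cosh_le_one_add_mul_sinh y) (by linarith)
      _ = (1 + y) * ((1 - c) * Real.sinh y) := by ring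
      _ ≤ (1 + y) * ((y - b) * Real.cosh y) :=
          mul_le_mul_of_nonneg_left (by linarith [sinh_sub_sinh_le hb hby]) (by linarith)
      _ = (y - b) * (1 + y) * Real.cosh y := by ring
  calc (1 - c) * (y ^ 2 / (1 + y)) = y * ((1 - c) * (y / (1 + y))) := by ring
    _ ≤ y * (y - b) := mul_le_mul_of_nonneg_left hgap hy
    _ ≤ y ^ 2 - b ^ 2 := by nlinarith

lemma two_mul_log_cosh_sub_log_cosh_le {b y : ℝ} (hb : 0 ≤ b) (hby : b ≤ y) :
    2 * (Real.log (Real.cosh y) - Real.log (Real.cosh b)) ≤ y ^ 2 - b ^ 2 := by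
  have hderiv (x : ℝ) : HasDerivAt (fun s => s ^ 2 - 2 * Real.log (Real.cosh s))
      (2 * x - 2 * (Real.sinh x / Real.cosh x)) x :=
    (((hasDerivAt_id x).pow 2).sub
      (((Real.hasDerivAt_cosh x).log (Real.cosh_pos x).ne').const_mul 2)).congr_deriv (by simp)
  have hmono := le_of_hasDerivAt_nonneg hby (fun x _ => hderiv x) fun x hx => by
    have htanh : Real.sinh x / Real.cosh x ≤ x :=
      (div_le_iff₀ (Real.cosh_pos x)).mpr (sinh_le_mul_cosh (hb.trans hx.1))
    linarith
  linarith

lemma mul_sq_sub_sq_le_log_cos_sub_log_cos {k a δ : ℝ} (ha : 0 < a) (hδ : δ < π / 2)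
    (haδ : a ≤ δ) (hk : ∀ s ∈ Icc a δ, k * s ≤ Real.tan s) :
    k * (δ ^ 2 - a ^ 2) ≤ 2 * (Real.log (Real.cos a) - Real.log (Real.cos δ)) := by
  have hderiv (x) (hx : x ∈ Icc a δ) : HasDerivAt (fun s => -2 * Real.log (Real.cos s) - k * s ^ 2)
      (-2 * (-Real.sin x / Real.cos x) - k * (2 * x)) x := by
    have hcos : 0 < Real.cos x :=
      Real.cos_pos_of_mem_Ioo ⟨by linarith [hx.1, Real.pi_pos], by linarith [hx.2]⟩
    exact ((((Real.hasDerivAt_cos x).log hcos.ne').const_mul (-2)).sub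
      (((hasDerivAt_id x).pow 2).const_mul k)).congr_deriv (by simp)
  have hmono := le_of_hasDerivAt_nonneg haδ hderiv fun x hx => by
    have htan := hk x hx
    rw [Real.tan_eq_sin_div_cos] at htan
    rw [neg_div]
    linarith
  linarith

lemma exists_one_lt_forall_mul_le_tan {θ δ : ℝ} (hθ : 0 < θ) (hθδ : θ ≤ δ) (hδ : δ < π / 2) :
    ∃ k > 1, ∀ s ∈ Icc θ δ, k * s ≤ Real.tan s := by
  have hcont : ContinuousOn (fun s => Real.tan s / s) (Icc θ δ) := by
    refine (Real.continuousOn_tan_Ioo.mono fun s hs => ?_).div continuousOn_id fun s hs => ?_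
    · exact ⟨by linarith [hs.1, Real.pi_pos], by linarith [hs.2]⟩
    · exact (hθ.trans_le hs.1).ne'
  obtain ⟨s₀, hs₀, hmin⟩ := isCompact_Icc.exists_isMinOn (nonempty_Icc.mpr hθδ) hcont
  have hs₀_pos : 0 < s₀ := hθ.trans_le hs₀.1
  refine ⟨Real.tan s₀ / s₀, ?_, fun s hs => ?_⟩
  · exact (one_lt_div hs₀_pos).mpr (Real.lt_tan hs₀_pos (by linarith [hs₀.2]))
  · exact (le_div_iff₀ (hθ.trans_le hs.1)).mp (hmin hs)

/-- The equation `cos (a + b i) = c * cos (θ + y i)` for points of the half strip, split into its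
real and imaginary parts. -/
structure ScaledCosEq (c θ a b y : ℝ) : Prop where
  re_mem : a ∈ Ioo 0 π
  im_nonneg : 0 ≤ b
  shift_nonneg : 0 ≤ y
  re_eq : Real.cosh b * Real.cos a = c * Real.cos θ * Real.cosh y
  im_eq : Real.sinh b * Real.sin a = c * Real.sin θ * Real.sinh y

namespace ScaledCosEq

variable {c θ a b y : ℝ}

lemma abs_cos_le (h : ScaledCosEq c θ a b y) (hc : c ∈ Ioo 0 1) :
    |Real.cos a| ≤ |Real.cos θ| := by
  refine sq_le_sq.mp (le_of_not_gt fun hlt => ?_)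
  have hsin_a : 0 < Real.sin a := Real.sin_pos_of_pos_of_lt_pi h.re_mem.1 h.re_mem.2
  have hcos_a_sq : 0 < Real.cos a ^ 2 := (sq_nonneg _).trans_lt hlt
  have hcosh : Real.cosh b ^ 2 ≤ c ^ 2 * Real.cosh y ^ 2 := by
    refine le_of_mul_le_mul_right ?_ hcos_a_sq
    rw [← mul_pow, h.re_eq]
    calc (c * Real.cos θ * Real.cosh y) ^ 2
        = c ^ 2 * Real.cosh y ^ 2 * Real.cos θ ^ 2 := by ring
      _ ≤ c ^ 2 * Real.cosh y ^ 2 * Real.cos a ^ 2 := by gcongr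
  have hsinh : c ^ 2 * Real.sinh y ^ 2 ≤ Real.sinh b ^ 2 := by
    refine le_of_mul_le_mul_right ?_ (by positivity : 0 < Real.sin a ^ 2)
    rw [← mul_pow (Real.sinh b), h.im_eq]
    have hsin : Real.sin a ^ 2 ≤ Real.sin θ ^ 2 := by
      linarith [Real.sin_sq_add_cos_sq a, Real.sin_sq_add_cos_sq θ]
    calc c ^ 2 * Real.sinh y ^ 2 * Real.sin a ^ 2
        ≤ c ^ 2 * Real.sinh y ^ 2 * Real.sin θ ^ 2 := by gcongr
      _ = (c * Real.sin θ * Real.sinh y) ^ 2 := by ring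
  nlinarith [Real.cosh_sq b, Real.cosh_sq y, hc.1, hc.2]

lemma sinh_le (h : ScaledCosEq c θ a b y) (hc : c ∈ Ioo 0 1) (hθ : θ ∈ Ioo 0 π) :
    Real.sinh b ≤ c * Real.sinh y := by
  have hsin_θ : 0 < Real.sin θ := Real.sin_pos_of_pos_of_lt_pi hθ.1 hθ.2
  have hsin_a : 0 < Real.sin a := Real.sin_pos_of_pos_of_lt_pi h.re_mem.1 h.re_mem.2
  have hsin : Real.sin θ ≤ Real.sin a := by
    refine (sq_le_sq₀ hsin_θ.le hsin_a.le).mp ?_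
    linarith [Real.sin_sq_add_cos_sq a, Real.sin_sq_add_cos_sq θ, sq_le_sq.mpr (h.abs_cos_le hc)]
  refine le_of_mul_le_mul_right ?_ hsin_a
  rw [h.im_eq, mul_right_comm]
  have hsinh_y : 0 ≤ Real.sinh y := Real.sinh_nonneg_iff.mpr h.shift_nonneg
  have hc_pos := hc.1
  gcongr

lemma im_le (h : ScaledCosEq c θ a b y) (hc : c ∈ Ioo 0 1) (hθ : θ ∈ Ioo 0 π) : b ≤ y := by
  have hsinh_y : 0 ≤ Real.sinh y := Real.sinh_nonneg_iff.mpr h.shift_nonneg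
  exact Real.sinh_le_sinh.mp ((h.sinh_le hc hθ).trans (mul_le_of_le_one_left hsinh_y hc.2.le))

lemma cosh_le (h : ScaledCosEq c θ a b y) (hc : c ∈ Ioo 0 1) (hθ : θ ∈ Ioo 0 π) :
    Real.cosh b ≤ Real.cosh y := by
  rw [Real.cosh_le_cosh, abs_of_nonneg h.im_nonneg, abs_of_nonneg h.shift_nonneg]
  exact h.im_le hc hθ

lemma le_sq_sub_sq (h : ScaledCosEq c θ a b y) (hc : c ∈ Ioo 0 1) (hθ : θ ∈ Ioo 0 π) :
    (1 - c) * (y ^ 2 / (1 + y)) ≤ y ^ 2 - b ^ 2 :=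
  le_sq_sub_sq_of_sinh_le hc.2 h.im_nonneg (h.im_le hc hθ) (h.sinh_le hc hθ)

lemma arccos_le_of_cos_nonpos (h : ScaledCosEq c θ a b y) (hc : c ∈ Ioo 0 1)
    (hθ : θ ∈ Ioo 0 π) (hcos : Real.cos θ ≤ 0) : Real.arccos (c * Real.cos θ) ≤ a := by
  have hcos_a : Real.cos a ≤ c * Real.cos θ := by
    refine le_of_mul_le_mul_left ?_ (Real.cosh_pos b)
    rw [h.re_eq]
    nlinarith [h.cosh_le hc hθ, mul_nonpos_of_nonneg_of_nonpos hc.1.le hcos]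
  rw [← Real.arccos_cos h.re_mem.1.le h.re_mem.2.le]
  exact Real.arccos_le_arccos hcos_a

lemma le_arccos_of_cos_pos (h : ScaledCosEq c θ a b y) (hc : c ∈ Ioo 0 1)
    (hθ : θ ∈ Ioo 0 π) (hcos : 0 < Real.cos θ) : a ≤ Real.arccos (c * Real.cos θ) := by
  have hcos_a : c * Real.cos θ ≤ Real.cos a := by
    refine le_of_mul_le_mul_left ?_ (Real.cosh_pos b)
    rw [h.re_eq]
    nlinarith [h.cosh_le hc hθ, mul_pos hc.1 hcos]
  rw [← Real.arccos_cos h.re_mem.1.le h.re_mem.2.le]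
  exact Real.arccos_le_arccos hcos_a

lemma cos_pos (h : ScaledCosEq c θ a b y) (hc : c ∈ Ioo 0 1) (hcos : 0 < Real.cos θ) :
    0 < Real.cos a := by
  refine pos_of_mul_pos_right ?_ (Real.cosh_pos b).le
  rw [h.re_eq]
  exact mul_pos (mul_pos hc.1 hcos) (Real.cosh_pos y)

lemma le_re_of_cos_pos (h : ScaledCosEq c θ a b y) (hc : c ∈ Ioo 0 1)
    (hθ : θ ∈ Ioo 0 π) (hcos : 0 < Real.cos θ) : θ ≤ a := by
  have habs := h.abs_cos_le hc
  rw [abs_of_pos (h.cos_pos hc hcos), abs_of_pos hcos] at habs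
  rw [← Real.arccos_cos hθ.1.le hθ.2.le, ← Real.arccos_cos h.re_mem.1.le h.re_mem.2.le]
  exact Real.arccos_le_arccos habs

/-- Taking logarithms in `cosh b * cos a = cos δ * cosh y` compares `δ² - a²`, through `log ∘ cos`,
with `y² - b²`, through `log ∘ cosh`. -/
lemma mul_arccos_sq_sub_sq_le (h : ScaledCosEq c θ a b y) (hc : c ∈ Ioo 0 1)
    (hθ : θ ∈ Ioo 0 π) (hcos : 0 < Real.cos θ) {k : ℝ}
    (hk : ∀ s ∈ Icc θ (Real.arccos (c * Real.cos θ)), k * s ≤ Real.tan s) :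
    k * (Real.arccos (c * Real.cos θ) ^ 2 - a ^ 2) ≤ y ^ 2 - b ^ 2 := by
  have hpos : 0 < c * Real.cos θ := mul_pos hc.1 hcos
  have hcos_arccos : Real.cos (Real.arccos (c * Real.cos θ)) = c * Real.cos θ :=
    Real.cos_arccos (by linarith) (by nlinarith [Real.cos_le_one θ, hc.2])
  have hlog : Real.log (Real.cosh b) + Real.log (Real.cos a) =
      Real.log (c * Real.cos θ) + Real.log (Real.cosh y) := by
    rw [← Real.log_mul (Real.cosh_pos b).ne' (h.cos_pos hc hcos).ne', h.re_eq,
      Real.log_mul hpos.ne' (Real.cosh_pos y).ne']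
  have hlog_cos := mul_sq_sub_sq_le_log_cos_sub_log_cos h.re_mem.1
    (Real.arccos_lt_pi_div_two.mpr hpos) (h.le_arccos_of_cos_pos hc hθ hcos)
    fun s hs => hk s ⟨(h.le_re_of_cos_pos hc hθ hcos).trans hs.1, hs.2⟩
  rw [hcos_arccos] at hlog_cos
  linarith [two_mul_log_cosh_sub_log_cosh_le h.im_nonneg (h.im_le hc hθ)]

end ScaledCosEq

lemma exists_forall_scaledCosEq_le {c θ : ℝ} (hc : c ∈ Ioo 0 1) (hθ : θ ∈ Ioo 0 π) :
    ∃ κ > 0, ∀ a b y : ℝ, ScaledCosEq c θ a b y →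
      Real.arccos (c * Real.cos θ) ^ 2 - y ^ 2 + κ * (y ^ 2 / (1 + y)) ≤ a ^ 2 - b ^ 2 := by
  have hc' : 0 < 1 - c := sub_pos.mpr hc.2
  rcases le_or_gt (Real.cos θ) 0 with hcos | hcos
  · refine ⟨1 - c, hc', fun a b y h => ?_⟩
    have hsq := pow_le_pow_left₀ (Real.arccos_nonneg _) (h.arccos_le_of_cos_nonpos hc hθ hcos) 2
    linarith [h.le_sq_sub_sq hc hθ]
  · have hδ : Real.arccos (c * Real.cos θ) < π / 2 :=
      Real.arccos_lt_pi_div_two.mpr (mul_pos hc.1 hcos)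
    have hθδ : θ ≤ Real.arccos (c * Real.cos θ) := by
      rw [← Real.arccos_cos hθ.1.le hθ.2.le, Real.cos_arccos (Real.neg_one_le_cos θ)
        (Real.cos_le_one θ)]
      exact Real.arccos_le_arccos (mul_le_of_le_one_left hcos.le hc.2.le)
    obtain ⟨k, hk_gt, hk⟩ := exists_one_lt_forall_mul_le_tan hθ.1 hθδ hδ
    have hk_pos : 0 < k := one_pos.trans hk_gt
    have hk_inv : 0 < 1 - k⁻¹ := sub_pos.mpr (inv_lt_one_of_one_lt₀ hk_gt)
    refine ⟨(1 - k⁻¹) * (1 - c), mul_pos hk_inv hc', fun a b y h => ?_⟩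
    have hratio : Real.arccos (c * Real.cos θ) ^ 2 - a ^ 2 ≤ k⁻¹ * (y ^ 2 - b ^ 2) :=
      (le_inv_mul_iff₀ hk_pos).mpr (h.mul_arccos_sq_sub_sq_le hc hθ hcos hk)
    linarith [mul_le_mul_of_nonneg_left (h.le_sq_sub_sq hc hθ) hk_inv.le]

lemma cos_mul_cos_mem_cutPlane {c θ : ℝ} (hc : c ∈ Ioo 0 1) (hθ : θ ∈ Ioo 0 π) (y : ℝ) :
    (c : ℂ) * Complex.cos (θ + I * y) ∈ cutPlane := by
  have hsin : 0 < Real.sin θ := Real.sin_pos_of_pos_of_lt_pi hθ.1 hθ.2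
  rcases eq_or_ne y 0 with rfl | hy
  · rw [Complex.ofReal_zero, mul_zero, add_zero, ← Complex.ofReal_cos, ← Complex.ofReal_mul]
    refine ofReal_mem_cutPlane ⟨?_, ?_⟩ <;>
      nlinarith [Real.neg_one_le_cos θ, Real.cos_le_one θ, hc.1, hc.2]
  · refine mem_cutPlane_of_im_ne_zero ?_
    rw [Complex.im_ofReal_mul, complexCos_im]
    simpa [hc.1.ne', hsin.ne'] using hy

lemma scaledCosEq_complexArccos {c θ : ℝ} (hc : c ∈ Ioo 0 1) (hθ : θ ∈ Ioo 0 π) (y : ℝ) :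
    ScaledCosEq c θ (complexArccos (c * Complex.cos (θ + I * y))).re
      |(complexArccos (c * Complex.cos (θ + I * y))).im| |y| := by
  have hmem := cos_mul_cos_mem_cutPlane hc hθ y
  have hre_mem := complexArccos_re_mem_Ioo hmem
  have hcos := cos_complexArccos hmem
  have hre := complexCos_re (complexArccos (c * Complex.cos (θ + I * y)))
  have him := complexCos_im (complexArccos (c * Complex.cos (θ + I * y)))
  rw [hcos, Complex.re_ofReal_mul, complexCos_re] at hre
  rw [hcos, Complex.im_ofReal_mul, complexCos_im] at him
  simp only [Complex.add_re, Complex.add_im, Complex.ofReal_re, Complex.ofReal_im,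
    Complex.I_mul_re, Complex.I_mul_im, neg_zero, add_zero, zero_add] at hre him
  refine ⟨hre_mem, abs_nonneg _, abs_nonneg _, ?_, ?_⟩
  · rw [Real.cosh_abs, Real.cosh_abs]
    linarith
  · have habs := congrArg abs him
    rw [abs_mul, abs_neg, abs_neg, abs_mul, abs_mul, abs_of_pos hc.1,
      abs_of_pos (Real.sin_pos_of_pos_of_lt_pi hθ.1 hθ.2),
      abs_of_pos (Real.sin_pos_of_pos_of_lt_pi hre_mem.1 hre_mem.2)] at habs
    rw [← Real.abs_sinh, ← Real.abs_sinh]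
    linarith

lemma abs_focalCos_mul_cos_le {c θ : ℝ} (hc : c ∈ Ioo 0 1) (hθ : θ ∈ Ioo 0 π) (y : ℝ) :
    |focalCos (c * Complex.cos (θ + I * y))| ≤ |Real.cos θ| := by
  rw [← cos_complexArccos_re (cos_mul_cos_mem_cutPlane hc hθ y)]
  exact (scaledCosEq_complexArccos hc hθ y).abs_cos_le hc

lemma exists_forall_le_re_complexArccos_sq {c θ : ℝ} (hc : c ∈ Ioo 0 1) (hθ : θ ∈ Ioo 0 π) :
    ∃ κ > 0, ∀ y : ℝ, Real.arccos (c * Real.cos θ) ^ 2 - y ^ 2 + κ * (y ^ 2 / (1 + |y|)) ≤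
      (complexArccos (c * Complex.cos (θ + I * y)) ^ 2).re := by
  obtain ⟨κ, hκ, hle⟩ := exists_forall_scaledCosEq_le hc hθ
  refine ⟨κ, hκ, fun y => ?_⟩
  have := hle _ _ _ (scaledCosEq_complexArccos hc hθ y)
  rw [sq_abs, sq_abs] at this
  rwa [pow_two (complexArccos _), Complex.mul_re, ← pow_two, ← pow_two]

/-! ### The spectral series -/

lemma hasSum_sum_range_half_of_hasSum_prod {f : ℕ × ℕ → ℝ} {a : ℝ} (h : HasSum f a) :
    HasSum (fun l => ∑ k ∈ Finset.range (l / 2 + 1), f (l - 2 * k, k)) a := by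
  refine (h.tsum_fiberwise fun mk : ℕ × ℕ => mk.1 + 2 * mk.2).congr_fun fun l => ?_
  have hfiber : (fun mk : ℕ × ℕ => mk.1 + 2 * mk.2) ⁻¹' {l} =
      ((Finset.range (l / 2 + 1)).image (fun k => (l - 2 * k, k)) : Finset (ℕ × ℕ)) := by
    ext ⟨m, k⟩
    simp only [Set.mem_preimage, Set.mem_singleton_iff, Finset.coe_image, Set.mem_image,
      Finset.mem_coe, Finset.mem_range, Prod.mk.injEq]
    constructor
    · exact fun h => ⟨k, by omega, by omega, rfl⟩
    · rintro ⟨k', h1, h2, h3⟩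
      omega
  rw [hfiber, Finset.tsum_subtype' _ f, Finset.sum_image fun x _ y _ hxy => (Prod.mk.inj hxy).2]

lemma summable_add_one_pow_mul_exp_neg (q : ℕ) {a : ℝ} (ha : 0 < a) :
    Summable fun k : ℕ => ((k : ℝ) + 1) ^ q * Real.exp (-a * k) := by
  have h := (summable_nat_add_iff 1).2 (Real.summable_pow_mul_exp_neg_nat_mul q ha)
  refine (h.mul_left (Real.exp a)).congr fun k => ?_
  push_cast
  rw [mul_left_comm, ← Real.exp_add]
  congr 2
  ring

lemma abs_jacobiCoeff_le {k s N : ℕ} (α β : ℕ) (hs : s ≤ k) (hN : 2 * k + α + β ≤ N) (hN0 : 0 < N) :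
    |jacobiCoeff k α β s| ≤ (N : ℝ) ^ (2 * k) := by
  have choose_le {p j : ℕ} (hp : p ≤ N) (hj : j ≤ k) : (p.choose j : ℝ) ≤ (N : ℝ) ^ k := by
    exact_mod_cast (Nat.choose_le_pow p j).trans
      ((Nat.pow_le_pow_left hp j).trans (Nat.pow_le_pow_right hN0 hj))
  rw [jacobiCoeff, abs_mul, abs_mul, abs_pow, abs_neg, abs_one, one_pow, one_mul, Nat.abs_cast,
    Nat.abs_cast, Nat.choose_symm_of_eq_add (show k + β = (β + s) + (k - s) by omega), two_mul,
    pow_add]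
  gcongr
  · exact choose_le (by omega) (by omega)
  · exact choose_le (by omega) hs

lemma abs_jacobiSum_le {k N : ℕ} (α β : ℕ) {z : ℝ} (hz : z ∈ Icc (0 : ℝ) 1)
    (hN : 2 * k + α + β ≤ N) (hN0 : 0 < N) :
    |jacobiSum k α β z| ≤ (k + 1) * (N : ℝ) ^ (2 * k) := by
  have term_le (s : ℕ) (hs : s ∈ Finset.range (k + 1)) :
      |jacobiCoeff k α β s * z ^ s| ≤ (N : ℝ) ^ (2 * k) := by
    rw [abs_mul, abs_of_nonneg (pow_nonneg hz.1 s)]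
    exact (mul_le_of_le_one_right (abs_nonneg _) (pow_le_one₀ hz.1 hz.2)).trans
      (abs_jacobiCoeff_le α β (Nat.lt_succ_iff.1 (Finset.mem_range.1 hs)) hN hN0)
  calc |jacobiSum k α β z| ≤ ∑ s ∈ Finset.range (k + 1), |jacobiCoeff k α β s * z ^ s| :=
        Finset.abs_sum_le_sum_abs _ _
    _ ≤ ∑ _s ∈ Finset.range (k + 1), (N : ℝ) ^ (2 * k) := Finset.sum_le_sum term_le
    _ = (k + 1) * (N : ℝ) ^ (2 * k) := by simp

lemma abs_modeCoeff_le (α m k : ℕ) {c : ℝ} (hc : c ∈ Icc (0 : ℝ) 1) :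
    |modeCoeff α m k c| ≤ (2 * k + m + α + 2 : ℝ) ^ (α + 2) * (2 * k + m + α + 2) ^ (2 * k) := by
  set N : ℕ := 2 * k + m + α + 2 with hN
  have hNcast : (2 * k + m + α + 2 : ℝ) = N := by rw [hN]; push_cast; ring
  have hjacobi : |jacobiSum k α (m + 1) (c ^ 2)| ≤ (k + 1) * (N : ℝ) ^ (2 * k) :=
    abs_jacobiSum_le α (m + 1) ⟨sq_nonneg c, pow_le_one₀ hc.1 hc.2⟩ (by omega) (by omega)
  have hchoose : ((k + m + α + 1).choose α : ℝ) ≤ (N : ℝ) ^ α := by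
    exact_mod_cast (Nat.choose_le_pow _ _).trans (Nat.pow_le_pow_left (by omega) _)
  have hm : (m + 1 : ℝ) ≤ N := by exact_mod_cast (by omega : m + 1 ≤ N)
  have hk : (k + 1 : ℝ) ≤ N := by exact_mod_cast (by omega : k + 1 ≤ N)
  rw [hNcast, modeCoeff, abs_mul, abs_mul, abs_mul, Nat.abs_cast,
    abs_of_nonneg (pow_nonneg hc.1 m), abs_of_nonneg (by positivity : (0 : ℝ) ≤ m + 1)]
  calc (m + 1) * ((k + m + α + 1).choose α : ℝ) * c ^ m * |jacobiSum k α (m + 1) (c ^ 2)|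
      ≤ N * (N : ℝ) ^ α * 1 * (N * (N : ℝ) ^ (2 * k)) := by
        gcongr
        · exact pow_nonneg hc.1 m
        · exact pow_le_one₀ hc.1 hc.2
        · exact hjacobi.trans (by gcongr)
    _ = (N : ℝ) ^ (α + 2) * N ^ (2 * k) := by ring

/-- The `(m, k)` term of the heat kernel series at `c = cos r`, without the constant factor and
the denominator `sin η`. The first Jacobi parameter `α` stands for `2n - 1`, which turns the
eigenvalue `4(k(k + 2n + m + 1) + nm)` into `4k(k + α + m + 2) + 2(α + 1)m`. -/
noncomputable def modeTerm (α : ℕ) (c t η : ℝ) (mk : ℕ × ℕ) : ℝ :=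
  (2 * mk.2 + mk.1 + α + 2) * modeCoeff α mk.1 mk.2 c *
    Real.exp (-(4 * mk.2 * (mk.2 + α + mk.1 + 2) + 2 * (α + 1) * mk.1) * t) *
    Real.sin ((mk.1 + 1) * η)

/-- The sum of the heat kernel series, without the constant factor and the denominator `sin η`. -/
noncomputable def modeKernel (α : ℕ) (c t η : ℝ) : ℝ :=
  ∑' mk, modeTerm α c t η mk

lemma pow_mul_exp_neg_sq_le {C t : ℝ} (hC : 0 < C) (ht : 0 < t) (k : ℕ) :
    C ^ k * Real.exp (-(2 * t * k ^ 2)) ≤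
      Real.exp ((Real.log C + 1) ^ 2 / (8 * t)) * Real.exp (-1 * k) := by
  nth_rewrite 1 [← Real.exp_log hC]
  rw [← Real.exp_nat_mul, ← Real.exp_add, ← Real.exp_add]
  refine Real.exp_le_exp.2 (sub_nonneg.1 ?_)
  have hsquare : (Real.log C + 1) ^ 2 / (8 * t) + -1 * k - (k * Real.log C + -(2 * t * k ^ 2)) =
      (4 * t * k - (Real.log C + 1)) ^ 2 / (8 * t) := by
    field_simp
    ring
  rw [hsquare]
  positivity

lemma sq_mul_exp_neg_le {t x : ℝ} (ht : 0 < t) (hx : 0 ≤ x) :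
    x ^ 2 * Real.exp (-(t * x)) ≤ 2 / t ^ 2 := by
  have h := Real.pow_div_factorial_le_exp (t * x) (by positivity) 2
  rw [Real.exp_neg, ← div_eq_mul_inv, div_le_div_iff₀ (Real.exp_pos _) (by positivity)]
  rw [Nat.factorial_two, div_le_iff₀ (by norm_num)] at h
  push_cast at h
  linarith

lemma exp_neg_eigenvalue_le (α m k : ℕ) {t : ℝ} (ht : 0 ≤ t) :
    Real.exp (-(4 * k * (k + α + m + 2) + 2 * (α + 1) * m) * t) ≤
      Real.exp (-(t * (2 * k + m + α + 2))) ^ k * Real.exp (-(2 * t * k ^ 2)) *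
        Real.exp (-(2 * (α + 1) * t) * m) := by
  rw [← Real.exp_nat_mul, ← Real.exp_add, ← Real.exp_add]
  refine Real.exp_le_exp.2 (sub_nonneg.1 ?_)
  have hdiff : k * -(t * (2 * k + m + α + 2)) + -(2 * t * k ^ 2) + -(2 * (α + 1) * t) * m -
      -(4 * k * (k + α + m + 2) + 2 * (α + 1) * m) * t = 3 * t * k * (α + m + 2) := by
    ring
  rw [hdiff]
  positivity

lemma abs_modeTerm_le (α m k : ℕ) {c t : ℝ} (η : ℝ) (hc : c ∈ Icc (0 : ℝ) 1) (ht : 0 < t) :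
    |modeTerm α c t η (m, k)| ≤
      (α + 4) ^ (α + 3) * Real.exp ((Real.log (2 / t ^ 2) + 1) ^ 2 / (8 * t)) *
        (((m + 1) ^ (α + 3) * Real.exp (-(2 * (α + 1) * t) * m)) *
          ((k + 1) ^ (α + 3) * Real.exp (-1 * k))) := by
  set N : ℝ := 2 * k + m + α + 2 with hN
  set E : ℝ := Real.exp (-(2 * (α + 1) * t) * m)
  have hN0 : 0 ≤ N := by positivity
  have hN_le : N ≤ (α + 4) * ((m + 1) * (k + 1)) := by
    rw [← sub_nonneg, hN]
    ring_nf
    positivity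
  have hcoeff : |modeCoeff α m k c| ≤ N ^ (α + 2) * N ^ (2 * k) := abs_modeCoeff_le α m k hc
  simp only [modeTerm]
  rw [← hN, abs_mul, abs_mul, abs_mul, abs_of_nonneg hN0, Real.abs_exp]
  calc N * |modeCoeff α m k c| * Real.exp _ * |Real.sin _|
      ≤ N * (N ^ (α + 2) * N ^ (2 * k)) *
          (Real.exp (-(t * N)) ^ k * Real.exp (-(2 * t * k ^ 2)) * E) * 1 := by
        gcongr
        · exact exp_neg_eigenvalue_le α m k ht.le
        · exact Real.abs_sin_le_one _
    _ = N ^ (α + 3) * ((N ^ 2 * Real.exp (-(t * N))) ^ k * Real.exp (-(2 * t * k ^ 2))) * E := by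
        rw [mul_pow, ← pow_mul]
        ring
    _ ≤ ((α + 4) * ((m + 1) * (k + 1))) ^ (α + 3) *
          ((2 / t ^ 2) ^ k * Real.exp (-(2 * t * k ^ 2))) * E := by
        gcongr
        exact sq_mul_exp_neg_le ht hN0
    _ ≤ ((α + 4) * ((m + 1) * (k + 1))) ^ (α + 3) *
          (Real.exp ((Real.log (2 / t ^ 2) + 1) ^ 2 / (8 * t)) * Real.exp (-1 * k)) * E := by
        gcongr ?_ * ?_ * E
        exact pow_mul_exp_neg_sq_le (by positivity) ht k
    _ = _ := by
        rw [mul_pow, mul_pow]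
        ring

lemma summable_modeTerm (α : ℕ) {c t : ℝ} (η : ℝ) (hc : c ∈ Icc (0 : ℝ) 1) (ht : 0 < t) :
    Summable (modeTerm α c t η) := by
  have hm := summable_add_one_pow_mul_exp_neg (α + 3) (show 0 < 2 * (α + 1) * t by positivity)
  have hk := summable_add_one_pow_mul_exp_neg (α + 3) one_pos
  exact Summable.of_norm_bounded
    ((hm.mul_of_nonneg hk (fun _ => by positivity) fun _ => by positivity).mul_left _)
    fun mk => abs_modeTerm_le α mk.1 mk.2 η hc ht

/-- The contribution of the modes with `m + 2k = l`, without the factor `exp (-t (l + α + 2)²)`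
they share. -/
noncomputable def levelSum (α l : ℕ) (c t η : ℝ) : ℝ :=
  (l + α + 2) * ∑ k ∈ Finset.range (l / 2 + 1), modeCoeff α (l - 2 * k) k c *
    (Real.exp (t * ((l - 2 * k : ℕ) + 1) ^ 2) * Real.sin (((l - 2 * k : ℕ) + 1) * η))

-- The eigenvalue equals `(l + α + 2)² - (m + 1)² - (α + 1)(α + 3)` on the level `l = m + 2k`.
lemma sum_modeTerm_eq_levelSum (α l : ℕ) (c t η : ℝ) :
    ∑ k ∈ Finset.range (l / 2 + 1), modeTerm α c t η (l - 2 * k, k) =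
      Real.exp ((α + 1) * (α + 3) * t) * (Real.exp (-t * (l + α + 2) ^ 2) *
        levelSum α l c t η) := by
  simp only [levelSum, Finset.mul_sum]
  refine Finset.sum_congr rfl fun k hk => ?_
  have hkl : 2 * k ≤ l := by
    have := Finset.mem_range.1 hk
    omega
  have hexp : -(4 * (k : ℝ) * (k + α + (l - 2 * k) + 2) + 2 * (α + 1) * (l - 2 * k)) * t =
      (α + 1) * (α + 3) * t + -t * (l + α + 2) ^ 2 + t * ((l - 2 * k) + 1) ^ 2 := by
    ring
  simp only [modeTerm]
  push_cast [Nat.cast_sub hkl]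
  rw [hexp, Real.exp_add, Real.exp_add]
  ring

lemma hasSum_modeKernel (α : ℕ) {c t : ℝ} (η : ℝ) (hc : c ∈ Icc (0 : ℝ) 1) (ht : 0 < t) :
    HasSum (fun l : ℕ => Real.exp ((α + 1) * (α + 3) * t) *
      (Real.exp (-t * (l + α + 2) ^ 2) * levelSum α l c t η)) (modeKernel α c t η) := by
  simpa only [modeKernel, sum_modeTerm_eq_levelSum] using
    hasSum_sum_range_half_of_hasSum_prod (summable_modeTerm α η hc ht).hasSum

lemma pKernel_eq_modeKernel {n : ℕ} (hn : 1 ≤ n) {J : ℕ → ℕ → ℕ → ℝ → ℝ} (hJ : IsJacobi J)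
    (t : ℝ) {r η : ℝ} (hr : r ∈ Ioo 0 (π / 2)) (hη : η ≠ 0) :
    pKernel n J t r η = ((2 * n - 1)! / (2 * π ^ (2 * n + 2)) / Real.sin η) *
      modeKernel (2 * n - 1) (Real.cos r) t η := by
  obtain ⟨α, hα⟩ : ∃ α, 2 * n = α + 1 := ⟨2 * n - 1, by omega⟩
  have hαcast : (2 * n : ℝ) = α + 1 := by exact_mod_cast hα
  have hn_eq : (n : ℝ) = (α + 1) / 2 := by linarith
  have hcos : Real.cos (2 * r) ∈ Ioo (-1 : ℝ) 1 := by
    have hsin : 0 < Real.sin (2 * r) :=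
      Real.sin_pos_of_pos_of_lt_pi (by linarith [hr.1]) (by linarith [hr.2])
    constructor <;> nlinarith [Real.sin_sq_add_cos_sq (2 * r)]
  have hcos_sq : (1 + Real.cos (2 * r)) / 2 = Real.cos r ^ 2 := by
    rw [Real.cos_two_mul]
    ring
  rw [pKernel, modeKernel, ← tsum_mul_left]
  refine tsum_congr fun ⟨m, k⟩ => ?_
  have hexp : -(4 * ((k : ℝ) * (k + 2 * n + m + 1) + n * m)) * t =
      -(4 * k * (k + α + m + 2) + 2 * (α + 1) * m) * t := by
    rw [hn_eq]
    ring
  simp only [pTerm, hexp]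
  simp only [modeTerm, modeCoeff, vertFactor, if_neg hη, hα, hαcast,
    Nat.add_sub_cancel, Real.Gamma_nat_eq_factorial,
    apply_eq_jacobiSum_of_isJacobi hJ _ _ _ hcos, hcos_sq, ← add_assoc]
  ring

/-! ### Cauchy's formula on circles -/

lemma integral_circle_mul_exp_neg {f : ℂ → ℂ} (hf : Differentiable ℂ f) {ρ : ℝ} (hρ : 0 < ρ)
    (x : ℂ) (d : ℕ) :
    ∫ ψ in (0 : ℝ)..2 * π, f (x + ρ * Complex.exp (ψ * I)) * Complex.exp (-(d * (ψ * I))) =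
      2 * π * ρ ^ d / d ! * iteratedDeriv d f x := by
  have hρ' : (ρ : ℂ) ≠ 0 := by exact_mod_cast hρ.ne'
  have hintegrand (ψ : ℝ) :
      f (x + ρ * Complex.exp (ψ * I)) * Complex.exp (-(d * (ψ * I))) =
        ρ ^ d / I * (deriv (circleMap x ρ) ψ •
          ((1 / (circleMap x ρ ψ - x) ^ (d + 1)) • f (circleMap x ρ ψ))) := by
    rw [deriv_circleMap, circleMap_sub_center, Complex.exp_neg, Complex.exp_nat_mul]
    simp only [circleMap, zero_add, smul_eq_mul]
    field_simp [Complex.exp_ne_zero]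
    ring
  have hcauchy := hf.diffContOnCl.circleIntegral_one_div_sub_center_pow_smul (c := x) hρ d
  rw [circleIntegral] at hcauchy
  simp only [hintegrand]
  rw [intervalIntegral.integral_const_mul, hcauchy, smul_eq_mul]
  field_simp

lemma integral_exp_circle_mul_exp_neg {ρ : ℝ} (hρ : 0 < ρ) (d : ℕ) :
    ∫ ψ in (0 : ℝ)..2 * π, Complex.exp (ρ * Complex.exp (ψ * I)) * Complex.exp (-(d * (ψ * I))) =
      2 * π * ρ ^ d / d ! := by
  simpa [iteratedDeriv_eq_iterate, Complex.iter_deriv_exp] using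
    integral_circle_mul_exp_neg Complex.differentiable_exp hρ 0 d

lemma iteratedDeriv_polynomial_eval (p : Polynomial ℂ) (d : ℕ) (x : ℂ) :
    iteratedDeriv d (fun z => p.eval z) x = (Polynomial.derivative^[d] p).eval x := by
  induction d generalizing p with
  | zero => simp
  | succ d ih =>
    have hderiv : deriv (fun z => p.eval z) = fun z => p.derivative.eval z :=
      funext fun z => p.deriv
    rw [iteratedDeriv_succ', hderiv, ih, Function.iterate_succ_apply]

lemma integral_polynomial_circle_mul_exp_neg (p : Polynomial ℂ) {ρ : ℝ} (hρ : 0 < ρ) (x : ℂ)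
    (d : ℕ) :
    ∫ ψ in (0 : ℝ)..2 * π, p.eval (x + ρ * Complex.exp (ψ * I)) * Complex.exp (-(d * (ψ * I))) =
      2 * π * ρ ^ d / d ! * (Polynomial.derivative^[d] p).eval x := by
  rw [integral_circle_mul_exp_neg p.differentiable hρ, iteratedDeriv_polynomial_eval]

/-! ### Gaussian integrals -/

section Gaussian

variable {t : ℝ}

lemma cexp_sq_div_mul_cexp (ht : 0 < t) (θ η v : ℝ) (M : ℂ) :
    Complex.exp ((θ - η + I * (√t * v)) ^ 2 / (4 * t)) *
        Complex.exp (M * (θ + I * (√t * v)) * I) =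
      Complex.exp (-(1 / 4) * v ^ 2 + (I * (θ - η) * √t / (2 * t) - M * √t) * v +
        ((θ - η) ^ 2 / (4 * t) + I * M * θ)) := by
  have hsq : (√t : ℂ) ^ 2 = t := by exact_mod_cast Real.sq_sqrt ht.le
  have ht' : (t : ℂ) ≠ 0 := by exact_mod_cast ht.ne'
  rw [← Complex.exp_add]
  congr 1
  field_simp
  linear_combination (2 * v ^ 2 * (√t : ℂ) ^ 2 + 8 * M * √t * v * t) * Complex.I_sq -
    2 * v ^ 2 * hsq

lemma neg_one_fourth_re_neg : (-(1 / 4) : ℂ).re < 0 := by norm_num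

lemma integrable_cexp_sq_div_mul_cexp (ht : 0 < t) (θ η : ℝ) (M : ℂ) :
    Integrable fun v : ℝ => Complex.exp ((θ - η + I * (√t * v)) ^ 2 / (4 * t)) *
      Complex.exp (M * (θ + I * (√t * v)) * I) := by
  simp only [cexp_sq_div_mul_cexp ht]
  exact integrable_cexp_quadratic' neg_one_fourth_re_neg _ _

lemma integral_cexp_sq_div_mul_cexp (ht : 0 < t) (θ η : ℝ) (M : ℂ) :
    ∫ v : ℝ, Complex.exp ((θ - η + I * (√t * v)) ^ 2 / (4 * t)) *
        Complex.exp (M * (θ + I * (√t * v)) * I) =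
      (√(4 * π) : ℝ) * (Complex.exp (t * M ^ 2) * Complex.exp (M * η * I)) := by
  have hsq : (√t : ℂ) ^ 2 = t := by exact_mod_cast Real.sq_sqrt ht.le
  have ht' : (t : ℂ) ≠ 0 := by exact_mod_cast ht.ne'
  have hconst : ((π : ℂ) / -(-(1 / 4))) ^ (1 / 2 : ℂ) = (√(4 * π) : ℝ) := by
    rw [Real.sqrt_eq_rpow, Complex.ofReal_cpow (by positivity)]
    push_cast
    congr 1
    ring
  simp only [cexp_sq_div_mul_cexp ht]
  rw [integral_cexp_quadratic neg_one_fourth_re_neg, hconst, ← Complex.exp_add]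
  congr 2
  field_simp
  ring_nf
  rw [Complex.I_sq]
  simp only [← hsq]
  ring

lemma cexp_mul_complexSin (a z : ℂ) :
    Complex.exp a * Complex.sin z =
      I / 2 * (Complex.exp a * Complex.exp (-z * I)) -
        I / 2 * (Complex.exp a * Complex.exp (z * I)) := by
  rw [Complex.sin]
  ring

lemma integrable_cexp_sq_div_mul_sin (ht : 0 < t) (θ η M : ℝ) :
    Integrable fun v : ℝ => Complex.exp ((θ - η + I * (√t * v)) ^ 2 / (4 * t)) *
      Complex.sin (M * (θ + I * (√t * v))) := by
  simp only [cexp_mul_complexSin, ← neg_mul]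
  exact ((integrable_cexp_sq_div_mul_cexp ht θ η (-M)).const_mul _).sub
    ((integrable_cexp_sq_div_mul_cexp ht θ η M).const_mul _)

lemma integral_cexp_sq_div_mul_sin (ht : 0 < t) (θ η M : ℝ) :
    ∫ v : ℝ, Complex.exp ((θ - η + I * (√t * v)) ^ 2 / (4 * t)) *
        Complex.sin (M * (θ + I * (√t * v))) =
      (√(4 * π) : ℝ) * (Complex.exp (t * M ^ 2) * Complex.sin (M * η)) := by
  simp only [cexp_mul_complexSin, ← neg_mul]
  rw [integral_sub ((integrable_cexp_sq_div_mul_cexp ht θ η (-M)).const_mul _)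
    ((integrable_cexp_sq_div_mul_cexp ht θ η M).const_mul _), integral_const_mul,
    integral_const_mul, integral_cexp_sq_div_mul_cexp ht, integral_cexp_sq_div_mul_cexp ht, neg_sq]
  ring

end Gaussian

/-! ### The theta series -/

lemma summable_exp_neg_mul_abs {a : ℝ} (ha : 0 < a) :
    Summable fun k : ℤ => Real.exp (-a * |(k : ℝ)|) := by
  have hnat : Summable fun k : ℕ => Real.exp (-a * k) := by
    simpa using Real.summable_pow_mul_exp_neg_nat_mul 0 ha
  exact Summable.of_nat_of_neg (by simpa using hnat) (by simpa using hnat)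

lemma half_abs_sub_floor_le_sub_sq_add_one (N : ℤ) (β : ℝ) :
    |((N - ⌊β⌋ : ℤ) : ℝ)| / 2 ≤ (N - β) ^ 2 + 1 := by
  set M : ℤ := N - ⌊β⌋
  have hM : |(M : ℝ)| ≤ (M : ℝ) ^ 2 := by
    exact_mod_cast (Int.natCast_natAbs M ▸ Int.natAbs_le_self_sq M : |M| ≤ M ^ 2)
  have hN : (N : ℝ) - β = M - Int.fract β := by
    simp only [M, Int.fract]
    push_cast
    ring
  have hfract_sq : Int.fract β ^ 2 ≤ 1 := pow_le_one₀ (Int.fract_nonneg β) (Int.fract_lt_one β).le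
  rw [hN]
  nlinarith [sq_nonneg ((M : ℝ) - 2 * Int.fract β)]

lemma exists_forall_sum_exp_neg_sub_sq_le {t : ℝ} (ht : 0 < t) :
    ∃ C : ℝ, ∀ (β : ℝ) (s : Finset ℤ), ∑ N ∈ s, Real.exp (-t * (N - β) ^ 2) ≤ C := by
  have hsum := summable_exp_neg_mul_abs (half_pos ht)
  refine ⟨Real.exp t * ∑' M : ℤ, Real.exp (-(t / 2) * |(M : ℝ)|), fun β s => ?_⟩
  have hshift : Summable fun N : ℤ => Real.exp (-(t / 2) * |((N - ⌊β⌋ : ℤ) : ℝ)|) :=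
    (Equiv.subRight ⌊β⌋).summable_iff.2 hsum
  rw [← (Equiv.subRight ⌊β⌋).tsum_eq fun M : ℤ => Real.exp (-(t / 2) * |(M : ℝ)|)]
  calc ∑ N ∈ s, Real.exp (-t * (N - β) ^ 2)
      ≤ ∑ N ∈ s, Real.exp t * Real.exp (-(t / 2) * |((N - ⌊β⌋ : ℤ) : ℝ)|) := by
        refine Finset.sum_le_sum fun N _ => ?_
        rw [← Real.exp_add]
        refine Real.exp_le_exp.2 ?_
        linarith [mul_le_mul_of_nonneg_left (half_abs_sub_floor_le_sub_sq_add_one N β) ht.le]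
    _ ≤ Real.exp t * ∑' N : ℤ, Real.exp (-(t / 2) * |((N - ⌊β⌋ : ℤ) : ℝ)|) := by
        rw [← Finset.mul_sum]
        gcongr
        exact hshift.sum_le_tsum s fun _ _ => by positivity

lemma norm_cexp_neg_sq_add {t : ℝ} (ht : 0 < t) (N : ℤ) (B : ℂ) :
    ‖Complex.exp (-t * N ^ 2 + N * B)‖ =
      Real.exp (-t * (N - B.re / (2 * t)) ^ 2) * Real.exp (B.re ^ 2 / (4 * t)) := by
  rw [Complex.norm_exp, ← Real.exp_add, ← Complex.ofReal_intCast, ← Complex.ofReal_neg,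
    ← Complex.ofReal_pow, ← Complex.ofReal_mul, Complex.add_re, Complex.re_ofReal_mul,
    Complex.ofReal_re]
  congr 1
  field_simp
  ring

lemma cexp_neg_sq_mul_cos (t : ℝ) (N : ℤ) (A : ℂ) :
    Complex.exp (-t * N ^ 2) * Complex.cos (N * A) =
      (1 / 2) * Complex.exp (-t * N ^ 2 + N * (A * I)) +
        (1 / 2) * Complex.exp (-t * N ^ 2 + N * (-A * I)) := by
  rw [Complex.cos, Complex.exp_add, Complex.exp_add, mul_assoc (N : ℂ), ← mul_neg,
    mul_assoc (N : ℂ)]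
  ring

lemma exists_forall_sum_norm_cexp_mul_cos_le {t : ℝ} (ht : 0 < t) :
    ∃ C : ℝ, ∀ (A : ℂ) (s : Finset ℤ),
      ∑ N ∈ s, ‖Complex.exp (-t * N ^ 2) * Complex.cos (N * A)‖ ≤
        C * Real.exp (A.im ^ 2 / (4 * t)) := by
  obtain ⟨C, hC⟩ := exists_forall_sum_exp_neg_sub_sq_le ht
  have sum_norm_le (B : ℂ) (s : Finset ℤ) :
      ∑ N ∈ s, ‖Complex.exp (-t * N ^ 2 + N * B)‖ ≤ C * Real.exp (B.re ^ 2 / (4 * t)) := by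
    simp only [norm_cexp_neg_sq_add ht]
    rw [← Finset.sum_mul]
    gcongr
    exact hC _ s
  refine ⟨C, fun A s => ?_⟩
  have hplus := sum_norm_le (A * I) s
  have hminus := sum_norm_le (-A * I) s
  simp only [Complex.mul_I_re, Complex.neg_im, neg_neg, neg_sq] at hplus hminus
  calc ∑ N ∈ s, ‖Complex.exp (-t * N ^ 2) * Complex.cos (N * A)‖
      ≤ ∑ N ∈ s, ((1 / 2) * ‖Complex.exp (-t * N ^ 2 + N * (A * I))‖ +
          (1 / 2) * ‖Complex.exp (-t * N ^ 2 + N * (-A * I))‖) := by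
        refine Finset.sum_le_sum fun N _ => ?_
        rw [cexp_neg_sq_mul_cos]
        exact (norm_add_le _ _).trans_eq (by simp only [norm_mul]; norm_num)
    _ ≤ C * Real.exp (A.im ^ 2 / (4 * t)) := by
        rw [Finset.sum_add_distrib, ← Finset.mul_sum, ← Finset.mul_sum]
        linarith

lemma summable_cexp_neg_sq_add {t : ℝ} (ht : 0 < t) (B : ℂ) :
    Summable fun N : ℤ => Complex.exp (-t * N ^ 2 + N * B) := by
  obtain ⟨C, hC⟩ := exists_forall_sum_exp_neg_sub_sq_le ht
  refine .of_norm (summable_of_sum_le (c := C * Real.exp (B.re ^ 2 / (4 * t)))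
    (fun _ => norm_nonneg _) fun s => ?_)
  simp only [norm_cexp_neg_sq_add ht]
  rw [← Finset.sum_mul]
  gcongr
  exact hC _ s

lemma tsum_cexp_neg_sq_mul_cos {t : ℝ} (ht : 0 < t) (A : ℂ) :
    ∑' N : ℤ, Complex.exp (-t * N ^ 2) * Complex.cos (N * A) =
      ∑' N : ℤ, Complex.exp (-t * N ^ 2 + N * (A * I)) := by
  have hneg : ∑' N : ℤ, Complex.exp (-t * N ^ 2 + N * (-A * I)) =
      ∑' N : ℤ, Complex.exp (-t * N ^ 2 + N * (A * I)) := by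
    rw [← (Equiv.neg ℤ).tsum_eq]
    simp
  simp only [cexp_neg_sq_mul_cos]
  rw [((summable_cexp_neg_sq_add ht _).mul_left _).tsum_add
    ((summable_cexp_neg_sq_add ht _).mul_left _), tsum_mul_left, tsum_mul_left, hneg]
  ring

/-- The Poisson dual of `∑ exp (-t N²) cos (N A)`, divided by its `k = 0` term. -/
noncomputable def thetaRatio (t : ℝ) (A : ℂ) : ℂ :=
  ∑' k : ℤ, Complex.exp (-(π * k * (π * k - A)) / t)

lemma tsum_cexp_neg_sq_mul_cos_eq_thetaRatio {t : ℝ} (ht : 0 < t) (A : ℂ) :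
    ∑' N : ℤ, Complex.exp (-t * N ^ 2) * Complex.cos (N * A) =
      (√(π / t) : ℝ) * Complex.exp (-A ^ 2 / (4 * t)) * thetaRatio t A := by
  have ht' : (t : ℂ) ≠ 0 := by exact_mod_cast ht.ne'
  have hπ : (π : ℂ) ≠ 0 := by exact_mod_cast Real.pi_ne_zero
  have hpoisson := Complex.tsum_exp_neg_quadratic (a := ((t / π : ℝ) : ℂ))
    (by rw [Complex.ofReal_re]; positivity) (I * A / (2 * π))
  have hleft (N : ℤ) : -(π : ℂ) * (t / π : ℝ) * N ^ 2 + 2 * π * (I * A / (2 * π)) * N =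
      -t * N ^ 2 + N * (A * I) := by
    push_cast
    field_simp
  have hright (k : ℤ) : -(π : ℂ) / (t / π : ℝ) * (k + I * (I * A / (2 * π))) ^ 2 =
      -A ^ 2 / (4 * t) + -(π * k * (π * k - A)) / t := by
    rw [show I * (I * A / (2 * π)) = -A / (2 * π) by
      linear_combination (A / (2 * π)) * Complex.I_sq]
    push_cast
    field_simp
    ring
  have hconst : (1 : ℂ) / ((t / π : ℝ) : ℂ) ^ (1 / 2 : ℂ) = (√(π / t) : ℝ) := by
    rw [← inv_div t π, Real.sqrt_inv, Real.sqrt_eq_rpow, Complex.ofReal_inv,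
      Complex.ofReal_cpow (by positivity), one_div]
    norm_num
  simp only [hleft, hright, hconst, Complex.exp_add (-A ^ 2 / (4 * t)), tsum_mul_left] at hpoisson
  rw [tsum_cexp_neg_sq_mul_cos ht, hpoisson, thetaRatio, mul_assoc]

lemma mul_abs_le_mul_pi_mul_sub {ε a : ℝ} (ha : a ∈ Icc ε (π - ε)) (k : ℤ) :
    ε * |(k : ℝ)| ≤ k * (π * k - a) := by
  obtain ⟨hεa, haπ⟩ := ha
  have hπ := Real.pi_pos
  rcases lt_trichotomy k 0 with hk | rfl | hk
  · have hk' : (k : ℝ) ≤ -1 := by exact_mod_cast (by omega : k ≤ -1)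
    have hgap : ε ≤ a - π * k := by nlinarith
    rw [abs_of_neg (by linarith)]
    nlinarith
  · simp
  · have hk' : (1 : ℝ) ≤ k := by exact_mod_cast hk
    have hgap : ε ≤ π * k - a := by nlinarith
    rw [abs_of_pos (by linarith)]
    nlinarith

lemma norm_thetaRatio_term_le {ε t : ℝ} (ht : 0 < t) {A : ℂ} (hA : A.re ∈ Icc ε (π - ε)) (k : ℤ) :
    ‖Complex.exp (-(π * k * (π * k - A)) / t)‖ ≤ Real.exp (-(π * ε * |(k : ℝ)|) / t) := by
  have hre : (-(π * k * (π * k - A)) / t : ℂ).re = -(π * (k * (π * k - A.re))) / t := by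
    rw [Complex.div_ofReal_re, show (-(π * k * (π * k - A)) : ℂ) =
      ((-(π * k) : ℝ) : ℂ) * (((π * k : ℝ) : ℂ) - A) by push_cast; ring,
      Complex.re_ofReal_mul, Complex.sub_re, Complex.ofReal_re]
    ring
  rw [Complex.norm_exp, hre, mul_assoc]
  gcongr Real.exp (-(π * ?_) / t)
  exact mul_abs_le_mul_pi_mul_sub hA k

lemma norm_thetaRatio_term_le_of_le_one {ε t : ℝ} (hε : 0 < ε) (ht : 0 < t) (ht1 : t ≤ 1) {A : ℂ}
    (hA : A.re ∈ Icc ε (π - ε)) (k : ℤ) :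
    ‖Complex.exp (-(π * k * (π * k - A)) / t)‖ ≤ Real.exp (-(π * ε) * |(k : ℝ)|) := by
  refine (norm_thetaRatio_term_le ht hA k).trans (Real.exp_le_exp.2 ?_)
  rw [neg_div, neg_mul, neg_le_neg_iff]
  exact le_div_self (by positivity) ht ht1

lemma exists_forall_norm_thetaRatio_le {ε : ℝ} (hε : 0 < ε) :
    ∃ C : ℝ, ∀ t ∈ Ioc (0 : ℝ) 1, ∀ A : ℂ, A.re ∈ Icc ε (π - ε) → ‖thetaRatio t A‖ ≤ C :=
  ⟨_, fun _ ht _ hA => tsum_of_norm_bounded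
    (summable_exp_neg_mul_abs (mul_pos Real.pi_pos hε)).hasSum
    (norm_thetaRatio_term_le_of_le_one hε ht.1 ht.2 hA)⟩

lemma tendsto_thetaRatio {ε : ℝ} (hε : 0 < ε) {A : ℝ → ℂ}
    (hA : ∀ᶠ t in 𝓝[>] 0, (A t).re ∈ Icc ε (π - ε)) :
    Tendsto (fun t => thetaRatio t (A t)) (𝓝[>] 0) (𝓝 1) := by
  have hunit : ∀ᶠ t in 𝓝[>] (0 : ℝ), t ∈ Ioc (0 : ℝ) 1 := Ioc_mem_nhdsGT one_pos
  rw [show (1 : ℂ) = ∑' k : ℤ, if k = 0 then 1 else 0 by simp]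
  refine tendsto_tsum_of_dominated_convergence
    (summable_exp_neg_mul_abs (mul_pos Real.pi_pos hε)) (fun k => ?_) ?_
  · rcases eq_or_ne k 0 with rfl | hk
    · simp
    have hdecay : Tendsto (fun t => Real.exp (-(π * ε * |(k : ℝ)|) / t)) (𝓝[>] 0) (𝓝 0) := by
      exact Real.tendsto_exp_atBot.comp
        (tendsto_inv_nhdsGT_zero.const_mul_atTop_of_neg (neg_neg_of_pos (by positivity)))
    rw [if_neg hk]
    refine squeeze_zero_norm' ?_ hdecay
    filter_upwards [hA, hunit] with t hAt ht using norm_thetaRatio_term_le ht.1 hAt k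
  · filter_upwards [hA, hunit] with t hAt ht k using
      norm_thetaRatio_term_le_of_le_one hε ht.1 ht.2 hAt k

/-! ### The shifted contour -/

section Contour

variable {c θ : ℝ}

lemma abs_cos_lt_one (hθ : θ ∈ Ioo 0 π) : |Real.cos θ| < 1 := by
  have hsin : 0 < Real.sin θ := Real.sin_pos_of_mem_Ioo hθ
  rw [← sq_lt_one_iff_abs_lt_one]
  nlinarith [Real.sin_sq_add_cos_sq θ]

lemma abs_focalCos_le_of_norm_sub_le (hc : c ∈ Ioo 0 1) (hθ : θ ∈ Ioo 0 π) {y : ℝ} {z : ℂ}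
    (hz : ‖z - c * Complex.cos (θ + I * y)‖ ≤ (1 - |Real.cos θ|) / 2) :
    |focalCos z| ≤ (1 + |Real.cos θ|) / 2 := by
  have hLip := abs_focalCos_sub_le z (c * Complex.cos (θ + I * y))
  have hcenter := abs_focalCos_mul_cos_le hc hθ y
  have htriangle := abs_sub_abs_le_abs_sub (focalCos z) (focalCos (c * Complex.cos (θ + I * y)))
  linarith

lemma complexArccos_re_mem_Icc {μ : ℝ} (hμ : μ < 1) {z : ℂ} (hz : |focalCos z| ≤ μ) :
    (complexArccos z).re ∈ Icc (arccos μ) (π - arccos μ) := by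
  have hcut : z ∈ cutPlane := hz.trans_lt hμ
  have hIoo := complexArccos_re_mem_Ioo hcut
  rw [← Real.arccos_cos hIoo.1.le hIoo.2.le, cos_complexArccos_re hcut, ← arccos_neg]
  exact ⟨arccos_le_arccos (abs_le.1 hz).2, arccos_le_arccos (abs_le.1 hz).1⟩

lemma exists_forall_le_re_complexArccos_sq_of_norm_sub_le (hc : c ∈ Ioo 0 1) (hθ : θ ∈ Ioo 0 π) :
    ∃ κ > 0, ∃ L, ∀ (y : ℝ) (z : ℂ),
      ‖z - c * Complex.cos (θ + I * y)‖ ≤ (1 - |Real.cos θ|) / 2 →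
      arccos (c * Real.cos θ) ^ 2 - y ^ 2 + κ * (y ^ 2 / (1 + |y|))
        - L * ‖z - c * Complex.cos (θ + I * y)‖ ≤ (complexArccos z ^ 2).re := by
  obtain ⟨κ, hκ, hcenter⟩ := exists_forall_le_re_complexArccos_sq hc hθ
  have hcos := abs_cos_lt_one hθ
  have hcos0 := abs_nonneg (Real.cos θ)
  set μ := (1 + |Real.cos θ|) / 2 with hμ
  have hσ : 0 < 1 - μ ^ 2 := by nlinarith
  refine ⟨κ, hκ, 2 * (π / √(1 - μ ^ 2) + 1), fun y z hz => ?_⟩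
  set x : ℂ := c * Complex.cos (θ + I * y)
  have hLip : ‖complexArccos z ^ 2 - complexArccos x ^ 2‖
      ≤ 2 * (π / √(1 - μ ^ 2) + 1) * ‖z - x‖ :=
    norm_complexArccos_sq_sub_le (Real.sqrt_pos.2 hσ) (by linarith) (Real.sq_sqrt hσ.le).le
      fun w hw => abs_focalCos_le_of_norm_sub_le hc hθ
        ((mem_closedBall_iff_norm.1 hw).trans hz)
  have hre := (abs_le.1 ((Complex.abs_re_le_norm _).trans hLip)).1
  rw [Complex.sub_re] at hre
  linarith [hcenter y]

lemma div_sub_le_sq_div_one_add_abs {s v y : ℝ} (hs : 0 < s) (hy : |y| ≤ s * |v|) :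
    |v| / s - 1 / s ^ 2 ≤ v ^ 2 / (1 + |y|) := by
  have hmono : v ^ 2 / (1 + s * |v|) ≤ v ^ 2 / (1 + |y|) := by gcongr
  refine le_trans ?_ hmono
  rw [le_div_iff₀ (by positivity), ← sq_abs v]
  calc (|v| / s - 1 / s ^ 2) * (1 + s * |v|) = |v| ^ 2 - 1 / s ^ 2 := by field_simp; ring
    _ ≤ |v| ^ 2 := sub_le_self _ (by positivity)

lemma contour_exponent_le {E Θ κ L R s t v : ℝ} (hs : 0 < s) (hs1 : s ≤ 1) (hsκ : 8 * s ≤ κ)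
    (ht : 0 < t) (hts : √t ≤ s)
    (hR : E - (√t * v) ^ 2 + κ * ((√t * v) ^ 2 / (1 + |√t * v|)) - L * t ≤ R) :
    (Θ - t * v ^ 2) / (4 * t) + √t * |v| + -R / (4 * t)
      ≤ (L / 4 + κ / (4 * s ^ 2)) + (-|v| + -(E - Θ) / (4 * t)) := by
  have habs : |√t * v| = √t * |v| := by rw [abs_mul, abs_of_nonneg (Real.sqrt_nonneg t)]
  have hgain := div_sub_le_sq_div_one_add_abs hs
    (habs.le.trans (mul_le_mul_of_nonneg_right hts (abs_nonneg v)))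
  rw [mul_pow, Real.sq_sqrt ht.le, mul_div_assoc] at hR
  have hκ : 0 ≤ κ := by linarith
  have hlower : E - t * v ^ 2 + κ * (t * (|v| / s - 1 / s ^ 2)) - L * t ≤ R :=
    le_trans (by gcongr) hR
  have hdiv : -R / (4 * t)
      ≤ -(E - t * v ^ 2 + κ * (t * (|v| / s - 1 / s ^ 2)) - L * t) / (4 * t) := by gcongr
  have hexpand : -(E - t * v ^ 2 + κ * (t * (|v| / s - 1 / s ^ 2)) - L * t) / (4 * t)
      = -E / (4 * t) + v ^ 2 / 4 - κ / (4 * s) * |v| + κ / (4 * s ^ 2) + L / 4 := by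
    field_simp
    ring
  have hΘ : (Θ - t * v ^ 2) / (4 * t) = Θ / (4 * t) - v ^ 2 / 4 := by field_simp
  have hEΘ : -(E - Θ) / (4 * t) = -E / (4 * t) + Θ / (4 * t) := by ring
  have htwo : 2 * |v| ≤ κ / (4 * s) * |v| := by
    gcongr
    rw [le_div_iff₀ (by positivity)]
    linarith
  have hone : √t * |v| ≤ 1 * |v| := by gcongr; exact hts.trans hs1
  linarith

end Contour

/-- The vertical line through `θ`, parametrised at the diffusive scale `√t`. -/
noncomputable def contourPoint (θ t v : ℝ) : ℂ := θ + I * (√t * v)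

/-- The circle of radius `t` around `c cos w`, where `w` runs over the contour; Cauchy's formula
on it produces the derivatives of Chebyshev polynomials. -/
noncomputable def circlePoint (c θ t v ψ : ℝ) : ℂ :=
  c * Complex.cos (contourPoint θ t v) + t * Complex.exp (ψ * I)

/-- The Gaussian factor `exp ((w - η)² / 4t) sin w` along the contour. -/
noncomputable def contourWeight (θ η t v : ℝ) : ℂ :=
  Complex.exp (((θ : ℂ) - η + I * (√t * v)) ^ 2 / (4 * t)) * Complex.sin (contourPoint θ t v)

lemma contourPoint_eq (θ t v : ℝ) : contourPoint θ t v = θ + I * ((√t * v : ℝ) : ℂ) := by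
  rw [contourPoint, Complex.ofReal_mul]

lemma norm_circlePoint_sub {t : ℝ} (ht : 0 ≤ t) (c θ v ψ : ℝ) :
    ‖circlePoint c θ t v ψ - c * Complex.cos (contourPoint θ t v)‖ = t := by
  rw [circlePoint, add_sub_cancel_left, norm_mul, Complex.norm_exp_ofReal_mul_I, mul_one,
    Complex.norm_real, Real.norm_of_nonneg ht]

lemma norm_complexSin_le (w : ℂ) : ‖Complex.sin w‖ ≤ Real.exp |w.im| := by
  have hcosh : ‖Complex.sin w‖ ≤ Real.cosh w.im := by
    rw [← sq_le_sq₀ (norm_nonneg _) (Real.cosh_pos _).le, norm_complexSin_sq]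
    nlinarith [Real.cosh_sq w.im, Real.sin_sq_le_one w.re]
  rw [← Real.cosh_abs] at hcosh
  have hle : Real.exp (-|w.im|) ≤ Real.exp |w.im| := by
    gcongr
    linarith [abs_nonneg w.im]
  rw [Real.cosh_eq] at hcosh
  linarith

lemma norm_contourWeight_le {t : ℝ} (ht : 0 < t) (θ η v : ℝ) :
    ‖contourWeight θ η t v‖
      ≤ Real.exp (((θ - η) ^ 2 - t * v ^ 2) / (4 * t)) * Real.exp (√t * |v|) := by
  have hgauss : ‖Complex.exp (((θ : ℂ) - η + I * (√t * v)) ^ 2 / (4 * t))‖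
      = Real.exp (((θ - η) ^ 2 - t * v ^ 2) / (4 * t)) := by
    have hcast : ((θ : ℂ) - η + I * (√t * v)) ^ 2 / (4 * t)
        = ((((θ - η : ℝ) : ℂ) + (√t * v : ℝ) * I) ^ 2) / ((4 * t : ℝ) : ℂ) := by
      push_cast
      ring
    rw [Complex.norm_exp, hcast, Complex.div_ofReal_re, ← Real.sq_sqrt ht.le,
      Real.sqrt_sq (Real.sqrt_nonneg t)]
    congr 2
    simp only [pow_two, Complex.mul_re, Complex.add_re, Complex.add_im, Complex.ofReal_re,
      Complex.ofReal_im, Complex.I_re, Complex.I_im, Complex.mul_im]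
    ring
  have him : |(contourPoint θ t v).im| = √t * |v| := by
    rw [contourPoint_eq]
    simp [abs_mul]
  rw [contourWeight, norm_mul, hgauss, ← him]
  gcongr
  exact norm_complexSin_le _

/-- Admissibility of the contour at time `t`: it stays in the domain of `complexArccos`, at distance
`ε` from the singularities of the theta ratio, and the integrand is dominated by
`M exp (-|v|)`. -/
structure ContourBound (c θ η t ε M : ℝ) : Prop where
  mem_cutPlane : ∀ v ψ, circlePoint c θ t v ψ ∈ cutPlane
  re_mem_Icc : ∀ v ψ, (complexArccos (circlePoint c θ t v ψ)).re ∈ Icc ε (π - ε)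
  norm_mul_exp_le : ∀ v ψ, ‖contourWeight θ η t v‖
    * Real.exp (-(complexArccos (circlePoint c θ t v ψ) ^ 2).re / (4 * t)) ≤ M * Real.exp (-|v|)

lemma exists_contourBound {c θ : ℝ} (hc : c ∈ Ioo 0 1) (hθ : θ ∈ Ioo 0 π) (η : ℝ) :
    ∃ ε > 0, ∃ t₁ ∈ Ioc (0 : ℝ) 1, ∃ C, ∀ t ∈ Ioc 0 t₁, ContourBound c θ η t ε
      (C * Real.exp (-(arccos (c * Real.cos θ) ^ 2 - (θ - η) ^ 2) / (4 * t))) := by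
  obtain ⟨κ, hκ, L, hre⟩ := exists_forall_le_re_complexArccos_sq_of_norm_sub_le hc hθ
  have hcos := abs_cos_lt_one hθ
  have hμ : (1 + |Real.cos θ|) / 2 < 1 := by linarith
  have hradius : 0 < (1 - |Real.cos θ|) / 2 := by linarith
  set s := min 1 (κ / 8)
  have hs : 0 < s := by positivity
  have hs1 : s ≤ 1 := min_le_left _ _
  have hsκ : 8 * s ≤ κ := by linarith [min_le_right 1 (κ / 8)]
  refine ⟨_, arccos_pos.2 hμ, min (s ^ 2) ((1 - |Real.cos θ|) / 2),
    ⟨lt_min (by positivity) hradius, (min_le_left _ _).trans (pow_le_one₀ hs.le hs1)⟩,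
    Real.exp (L / 4 + κ / (4 * s ^ 2)), fun t ht => ?_⟩
  have hts : √t ≤ s := (Real.sqrt_le_left hs.le).2 (ht.2.trans (min_le_left _ _))
  have hdist (v ψ : ℝ) :
      ‖circlePoint c θ t v ψ - c * Complex.cos (θ + I * (√t * v : ℝ))‖ = t := by
    rw [← contourPoint_eq, norm_circlePoint_sub ht.1.le]
  have hclose (v ψ : ℝ) :
      ‖circlePoint c θ t v ψ - c * Complex.cos (θ + I * (√t * v : ℝ))‖
        ≤ (1 - |Real.cos θ|) / 2 := (hdist v ψ).trans_le (ht.2.trans (min_le_right _ _))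
  have hfocal (v ψ : ℝ) := abs_focalCos_le_of_norm_sub_le hc hθ (hclose v ψ)
  refine ⟨fun v ψ => (hfocal v ψ).trans_lt hμ,
    fun v ψ => complexArccos_re_mem_Icc hμ (hfocal v ψ), fun v ψ => ?_⟩
  have hR := hre _ _ (hclose v ψ)
  rw [hdist] at hR
  calc ‖contourWeight θ η t v‖
        * Real.exp (-(complexArccos (circlePoint c θ t v ψ) ^ 2).re / (4 * t))
      ≤ Real.exp (((θ - η) ^ 2 - t * v ^ 2) / (4 * t)) * Real.exp (√t * |v|)
        * Real.exp (-(complexArccos (circlePoint c θ t v ψ) ^ 2).re / (4 * t)) := by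
        gcongr
        exact norm_contourWeight_le ht.1 θ η v
    _ ≤ Real.exp (L / 4 + κ / (4 * s ^ 2)) * (Real.exp (-|v|)
        * Real.exp (-(arccos (c * Real.cos θ) ^ 2 - (θ - η) ^ 2) / (4 * t))) := by
        simp only [← Real.exp_add]
        exact Real.exp_le_exp.2 (contour_exponent_le hs hs1 hsκ ht.1 hts hR)
    _ = _ := by ring

/-! ### The contour integral representation -/

/-- Lebesgue measure on the parameters `(v, ψ)` of the contour and of the circles around it. -/
noncomputable def contourMeasure : Measure (ℝ × ℝ) :=
  (volume : Measure ℝ).prod ((volume : Measure ℝ).restrict (Ioc 0 (2 * π)))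

lemma integrable_exp_neg_abs : Integrable fun v : ℝ => Real.exp (-|v|) := by
  refine (integrable_inv_one_add_sq.const_mul 2).mono' (by fun_prop) (ae_of_all _ fun v => ?_)
  rw [Real.norm_of_nonneg (Real.exp_pos _).le, Real.exp_neg, ← div_eq_mul_inv, inv_eq_one_div,
    div_le_div_iff₀ (Real.exp_pos _) (by positivity)]
  have hquad := Real.quadratic_le_exp_of_nonneg (abs_nonneg v)
  rw [sq_abs] at hquad
  linarith [abs_nonneg v]

lemma integrable_exp_neg_abs_fst :
    Integrable (fun p : ℝ × ℝ => Real.exp (-|p.1|)) contourMeasure :=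
  integrable_exp_neg_abs.comp_fst _

/-- The `N`-th term, in Chebyshev form, of the theta series integrated over the contour. -/
noncomputable def chebyshevIntegrand (c θ η t : ℝ) (d : ℕ) (N : ℤ) (p : ℝ × ℝ) : ℂ :=
  Complex.exp (-t * N ^ 2) * (contourWeight θ η t p.1
    * ((Polynomial.Chebyshev.T ℂ N).eval (circlePoint c θ t p.1 p.2)
      * Complex.exp (-(d * (p.2 * I)))))

/-- The sum over `N : ℤ` of `chebyshevIntegrand`, after Poisson summation. -/
noncomputable def thetaIntegrand (c θ η t : ℝ) (d : ℕ) (p : ℝ × ℝ) : ℂ :=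
  contourWeight θ η t p.1 * Complex.exp (-(d * (p.2 * I)))
    * ((√(π / t) : ℝ) * Complex.exp (-complexArccos (circlePoint c θ t p.1 p.2) ^ 2 / (4 * t))
      * thetaRatio t (complexArccos (circlePoint c θ t p.1 p.2)))

lemma continuous_chebyshevIntegrand (c θ η t : ℝ) (d : ℕ) (N : ℤ) :
    Continuous (chebyshevIntegrand c θ η t d N) := by
  unfold chebyshevIntegrand contourWeight circlePoint contourPoint
  fun_prop

lemma chebyshevIntegrand_neg (c θ η t : ℝ) (d : ℕ) (N : ℤ) :
    chebyshevIntegrand c θ η t d (-N) = chebyshevIntegrand c θ η t d N := by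
  funext p
  simp [chebyshevIntegrand, Polynomial.Chebyshev.T_neg]

lemma norm_cexp_neg_nat_mul_I (d : ℕ) (ψ : ℝ) : ‖Complex.exp (-(d * (ψ * I)))‖ = 1 := by
  rw [Complex.norm_exp]
  simp

section Representation

variable {c θ η t ε M : ℝ}

lemma chebyshevIntegrand_eq {p : ℝ × ℝ} (hp : circlePoint c θ t p.1 p.2 ∈ cutPlane) (η : ℝ)
    (d : ℕ) (N : ℤ) :
    chebyshevIntegrand c θ η t d N p
      = contourWeight θ η t p.1 * Complex.exp (-(d * (p.2 * I)))
        * (Complex.exp (-t * N ^ 2)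
          * Complex.cos (N * complexArccos (circlePoint c θ t p.1 p.2))) := by
  rw [chebyshevIntegrand, ← Polynomial.Chebyshev.T_complex_cos, cos_complexArccos hp]
  ring

lemma tsum_chebyshevIntegrand {p : ℝ × ℝ} (ht : 0 < t)
    (hp : circlePoint c θ t p.1 p.2 ∈ cutPlane) (η : ℝ) (d : ℕ) :
    ∑' N, chebyshevIntegrand c θ η t d N p = thetaIntegrand c θ η t d p := by
  simp only [chebyshevIntegrand_eq hp]
  rw [tsum_mul_left, tsum_cexp_neg_sq_mul_cos_eq_thetaRatio ht, thetaIntegrand]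

lemma ContourBound.exists_forall_sum_norm_le (h : ContourBound c θ η t ε M) (ht : 0 < t)
    (d : ℕ) :
    ∃ C, ∀ p s, ∑ N ∈ s, ‖chebyshevIntegrand c θ η t d N p‖ ≤ C * Real.exp (-|p.1|) := by
  obtain ⟨C, hC⟩ := exists_forall_sum_norm_cexp_mul_cos_le ht
  have hC0 : 0 ≤ C := by simpa using hC 0 ∅
  refine ⟨C * Real.exp (π ^ 2 / (4 * t)) * M, fun p s => ?_⟩
  have hp := h.mem_cutPlane p.1 p.2
  simp only [chebyshevIntegrand_eq hp, norm_mul _ (Complex.exp (-t * _ ^ 2) * _),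
    ← Finset.mul_sum]
  rw [norm_mul, norm_cexp_neg_nat_mul_I, mul_one]
  have hbound := h.norm_mul_exp_le p.1 p.2
  have hre := complexArccos_re_mem_Ioo hp
  set A := complexArccos (circlePoint c θ t p.1 p.2)
  have him : A.im ^ 2 ≤ π ^ 2 - (A ^ 2).re := by
    rw [pow_two A, Complex.mul_re]
    nlinarith [hre.1, hre.2]
  calc ‖contourWeight θ η t p.1‖ * ∑ N ∈ s, ‖Complex.exp (-t * N ^ 2) * Complex.cos (N * A)‖
      ≤ ‖contourWeight θ η t p.1‖ * (C * Real.exp ((π ^ 2 - (A ^ 2).re) / (4 * t))) := by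
        gcongr
        exact (hC A s).trans (by gcongr)
    _ = C * Real.exp (π ^ 2 / (4 * t))
        * (‖contourWeight θ η t p.1‖ * Real.exp (-(A ^ 2).re / (4 * t))) := by
        rw [sub_eq_add_neg, add_div, Real.exp_add]
        ring
    _ ≤ C * Real.exp (π ^ 2 / (4 * t)) * (M * Real.exp (-|p.1|)) := by gcongr
    _ = _ := by ring

lemma ContourBound.integrable_chebyshevIntegrand (h : ContourBound c θ η t ε M) (ht : 0 < t)
    (d : ℕ) (N : ℤ) : Integrable (chebyshevIntegrand c θ η t d N) contourMeasure := by
  obtain ⟨C, hC⟩ := h.exists_forall_sum_norm_le ht d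
  refine (integrable_exp_neg_abs_fst.const_mul C).mono'
    (continuous_chebyshevIntegrand c θ η t d N).aestronglyMeasurable (ae_of_all _ fun p => ?_)
  simpa using hC p {N}

lemma ContourBound.hasSum_chebyshevIntegrand (h : ContourBound c θ η t ε M) (ht : 0 < t) (d : ℕ)
    (p : ℝ × ℝ) :
    HasSum (fun N => chebyshevIntegrand c θ η t d N p) (thetaIntegrand c θ η t d p) := by
  obtain ⟨C, hC⟩ := h.exists_forall_sum_norm_le ht d
  rw [← tsum_chebyshevIntegrand ht (h.mem_cutPlane p.1 p.2)]
  exact (Summable.of_norm (summable_of_sum_le (fun _ => norm_nonneg _) (hC p))).hasSum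

lemma ContourBound.hasSum_integral_chebyshevIntegrand (h : ContourBound c θ η t ε M)
    (ht : 0 < t) (d : ℕ) :
    HasSum (fun N => ∫ p, chebyshevIntegrand c θ η t d N p ∂contourMeasure)
      (∫ p, thetaIntegrand c θ η t d p ∂contourMeasure) := by
  obtain ⟨C, hC⟩ := h.exists_forall_sum_norm_le ht d
  have hintegrable := h.integrable_chebyshevIntegrand ht d
  have hsummable :
      Summable fun N => ∫ p, ‖chebyshevIntegrand c θ η t d N p‖ ∂contourMeasure := by
    refine summable_of_sum_le (c := ∫ p : ℝ × ℝ, C * Real.exp (-|p.1|) ∂contourMeasure)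
      (fun N => integral_nonneg fun _ => norm_nonneg _) fun s => ?_
    rw [← integral_finsetSum _ fun N _ => (hintegrable N).norm]
    exact integral_mono (integrable_finsetSum _ fun N _ => (hintegrable N).norm)
      (integrable_exp_neg_abs_fst.const_mul C) fun p => hC p s
  simpa only [(h.hasSum_chebyshevIntegrand ht d _).tsum_eq] using
    hasSum_integral_of_summable_integral_norm hintegrable hsummable

lemma ContourBound.aestronglyMeasurable_thetaIntegrand (h : ContourBound c θ η t ε M)
    (ht : 0 < t) (d : ℕ) :
    AEStronglyMeasurable (thetaIntegrand c θ η t d) contourMeasure :=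
  aestronglyMeasurable_of_tendsto_ae (atTop : Filter (Finset ℤ))
    (fun _ => (continuous_finsetSum _ fun N _ =>
      continuous_chebyshevIntegrand c θ η t d N).aestronglyMeasurable)
    (ae_of_all _ (h.hasSum_chebyshevIntegrand ht d))

lemma integral_chebyshevIntegrand (ht : 0 < t) {d : ℕ} {N : ℤ}
    (hintegrable : Integrable (chebyshevIntegrand c θ η t d N) contourMeasure) :
    ∫ p, chebyshevIntegrand c θ η t d N p ∂contourMeasure
      = Complex.exp (-t * N ^ 2) * (2 * π * t ^ d / d !) * ∫ v : ℝ, contourWeight θ η t v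
        * (Polynomial.derivative^[d] (Polynomial.Chebyshev.T ℂ N)).eval
          (c * Complex.cos (contourPoint θ t v)) := by
  unfold contourMeasure at hintegrable ⊢
  rw [integral_prod _ hintegrable, ← integral_const_mul]
  congr 1
  funext v
  have hcircle := integral_polynomial_circle_mul_exp_neg (Polynomial.Chebyshev.T ℂ N) ht
    (c * Complex.cos (contourPoint θ t v)) d
  rw [intervalIntegral.integral_of_le (by positivity)] at hcircle
  simp only [chebyshevIntegrand]
  rw [integral_const_mul, integral_const_mul]
  simp only [circlePoint]
  rw [hcircle]
  ring

lemma integral_chebyshevIntegrand_eq_zero (ht : 0 < t) {d : ℕ} {N : ℤ}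
    (hintegrable : Integrable (chebyshevIntegrand c θ η t d N) contourMeasure) (hN : N.natAbs < d) :
    ∫ p, chebyshevIntegrand c θ η t d N p ∂contourMeasure = 0 := by
  rw [integral_chebyshevIntegrand ht hintegrable, Polynomial.iterate_derivative_eq_zero
    (by rwa [Polynomial.Chebyshev.natDegree_T])]
  simp

lemma contourWeight_mul_eval_derivative_chebyshev (α l : ℕ) (c θ η t v : ℝ) :
    contourWeight θ η t v * (Polynomial.derivative^[α + 2]
        (Polynomial.Chebyshev.T ℂ ((l + α + 2 : ℕ) : ℤ))).eval
          (c * Complex.cos (contourPoint θ t v))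
      = 2 ^ (α + 1) * (α ! : ℂ) * ((l + α + 2 : ℕ) * ∑ k ∈ Finset.range (l / 2 + 1),
        (modeCoeff α (l - 2 * k) k c : ℂ)
          * (Complex.exp (((θ : ℂ) - η + I * (√t * v)) ^ 2 / (4 * t))
            * Complex.sin (((((l - 2 * k : ℕ) : ℝ) + 1 : ℝ) : ℂ) * (θ + I * (√t * v))))) := by
  have hne : (2 : ℂ) ^ (α + 1) * (α ! : ℂ) ≠ 0 := by simp [Nat.factorial_ne_zero]
  have hmode := (eq_inv_mul_iff_mul_eq₀ hne).1 (sum_modeCoeff_mul_sin α l c (contourPoint θ t v))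
  rw [contourWeight, mul_assoc, ← hmode]
  simp only [contourPoint, Finset.mul_sum]
  refine Finset.sum_congr rfl fun k _ => ?_
  push_cast
  ring

lemma integral_contourWeight_mul_eval_derivative_chebyshev (ht : 0 < t) (α l : ℕ) (c θ η : ℝ) :
    ∫ v : ℝ, contourWeight θ η t v * (Polynomial.derivative^[α + 2]
        (Polynomial.Chebyshev.T ℂ ((l + α + 2 : ℕ) : ℤ))).eval
          (c * Complex.cos (contourPoint θ t v))
      = 2 ^ (α + 1) * (α ! : ℂ) * ((√(4 * π) : ℝ) * (levelSum α l c t η : ℂ)) := by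
  simp only [contourWeight_mul_eval_derivative_chebyshev, levelSum]
  rw [integral_const_mul, integral_const_mul, integral_finsetSum _ fun k _ =>
    (integrable_cexp_sq_div_mul_sin ht θ η _).const_mul _]
  simp only [integral_const_mul, integral_cexp_sq_div_mul_sin ht]
  push_cast
  simp only [Finset.mul_sum]
  refine Finset.sum_congr rfl fun k _ => ?_
  ring

/-- The constant in front of the contour integral: it collects the Gaussian and Cauchy
normalisations, and `1 / 2` because the theta series counts each `±N`. -/
noncomputable def contourConst (α : ℕ) (t : ℝ) : ℝ :=
  Real.exp ((α + 1) * (α + 3) * t) * (√(4 * π))⁻¹ * (2 ^ (α + 1) * α ! : ℝ)⁻¹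
    * ((α + 2)! / (2 * π * t ^ (α + 2))) * (1 / 2)

lemma contourConst_mul_integral_chebyshevIntegrand (ht : 0 < t) {α l : ℕ}
    (hintegrable : Integrable (chebyshevIntegrand c θ η t (α + 2) ((l + α + 2 : ℕ) : ℤ))
      contourMeasure) :
    contourConst α t * (2 * ∫ p, chebyshevIntegrand c θ η t (α + 2) ((l + α + 2 : ℕ) : ℤ) p
        ∂contourMeasure)
      = ((Real.exp ((α + 1) * (α + 3) * t)
        * (Real.exp (-t * (l + α + 2) ^ 2) * levelSum α l c t η) : ℝ) : ℂ) := by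
  rw [integral_chebyshevIntegrand ht hintegrable,
    integral_contourWeight_mul_eval_derivative_chebyshev ht, contourConst]
  have hsqrt : ((√(4 * π) : ℝ) : ℂ) ≠ 0 := by
    exact_mod_cast (Real.sqrt_pos.2 (by positivity : (0 : ℝ) < 4 * π)).ne'
  have hα : (α ! : ℂ) ≠ 0 := Nat.cast_ne_zero.2 (Nat.factorial_ne_zero _)
  have hα2 : ((α + 2)! : ℂ) ≠ 0 := Nat.cast_ne_zero.2 (Nat.factorial_ne_zero _)
  have htne : (t : ℂ) ≠ 0 := by exact_mod_cast ht.ne'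
  have hπ : (π : ℂ) ≠ 0 := by exact_mod_cast Real.pi_ne_zero
  push_cast
  field_simp

lemma ContourBound.modeKernel_eq_integral (h : ContourBound c θ η t ε M) (ht : 0 < t)
    (hc : c ∈ Icc 0 1) (α : ℕ) :
    (modeKernel α c t η : ℂ)
      = contourConst α t * ∫ p, thetaIntegrand c θ η t (α + 2) p ∂contourMeasure := by
  have hintegrable := h.integrable_chebyshevIntegrand ht (α + 2)
  have hfold := (h.hasSum_integral_chebyshevIntegrand ht (α + 2)).nat_add_neg
  rw [integral_chebyshevIntegrand_eq_zero ht (hintegrable 0) (by simp), add_zero] at hfold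
  simp only [chebyshevIntegrand_neg, ← two_mul] at hfold
  have hlow : ∑ N ∈ Finset.range (α + 2),
      2 * ∫ p, chebyshevIntegrand c θ η t (α + 2) N p ∂contourMeasure = 0 :=
    Finset.sum_eq_zero fun N hN => by
      rw [integral_chebyshevIntegrand_eq_zero ht (hintegrable _) (by simpa using hN), mul_zero]
  rw [← hasSum_nat_add_iff' (α + 2), hlow, sub_zero] at hfold
  refine (Complex.hasSum_ofReal.2 (hasSum_modeKernel α η hc ht)).unique
    ((hfold.mul_left (contourConst α t : ℂ)).congr_fun fun l => ?_)
  exact (contourConst_mul_integral_chebyshevIntegrand ht (hintegrable _)).symm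

end Representation

/-! ### Expansion of the phase at the critical point -/

lemma isLittleO_sub_half_sq_smul {𝕜 E : Type*} [RCLike 𝕜] [NormedAddCommGroup E]
    [NormedSpace 𝕜 E] {f f' : 𝕜 → E} {b : E} (hf : ∀ᶠ s in 𝓝 0, HasDerivAt f (f' s) s)
    (hf' : HasDerivAt f' b 0) (h0 : f 0 = 0) (h0' : f' 0 = 0) :
    (fun s => f s - (s ^ 2 / 2) • b) =o[𝓝 0] fun s => s ^ 2 := by
  refine Asymptotics.isLittleO_iff.2 fun ε hε => ?_
  obtain ⟨δ, hδ, hball⟩ := Metric.eventually_nhds_iff_ball.1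
    (hf.and ((hasDerivAt_iff_isLittleO.1 hf').def hε))
  filter_upwards [Metric.ball_mem_nhds 0 hδ] with s hs
  have hsub {x : 𝕜} (hx : x ∈ Metric.closedBall 0 ‖s‖) : x ∈ Metric.ball 0 δ := by
    rw [mem_ball_zero_iff] at hs ⊢
    exact (mem_closedBall_zero_iff.1 hx).trans_lt hs
  have hderiv : ∀ x ∈ Metric.closedBall 0 ‖s‖, HasDerivWithinAt
      (fun x => f x - (x ^ 2 / 2) • b) (f' x - x • b) (Metric.closedBall 0 ‖s‖) x := by
    intro x hx
    have hsq : HasDerivAt (fun x : 𝕜 => x ^ 2 / 2) x x := by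
      simpa using (hasDerivAt_pow 2 x).div_const 2
    exact ((hball x (hsub hx)).1.sub (hsq.smul_const b)).hasDerivWithinAt
  have hbound : ∀ x ∈ Metric.closedBall 0 ‖s‖, ‖f' x - x • b‖ ≤ ε * ‖s‖ := by
    intro x hx
    have hsmall := (hball x (hsub hx)).2
    rw [h0', sub_zero, sub_zero] at hsmall
    exact hsmall.trans (by gcongr; exact mem_closedBall_zero_iff.1 hx)
  have hmean := (convex_closedBall (0 : 𝕜) ‖s‖).norm_image_sub_le_of_norm_hasDerivWithin_le
    hderiv hbound (Metric.mem_closedBall_self (norm_nonneg s)) (mem_closedBall_zero_iff.2 le_rfl)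
  simpa [h0, pow_two, mul_assoc] using hmean

lemma tendsto_inv_sq_smul {𝕜 E : Type*} [RCLike 𝕜] [NormedAddCommGroup E]
    [NormedSpace 𝕜 E] {f f' : 𝕜 → E} {b : E} (hf : ∀ᶠ s in 𝓝 0, HasDerivAt f (f' s) s)
    (hf' : HasDerivAt f' b 0) (h0 : f 0 = 0) (h0' : f' 0 = 0) :
    Tendsto (fun s => (s ^ 2)⁻¹ • f s) (𝓝[≠] 0) (𝓝 ((2 : 𝕜)⁻¹ • b)) := by
  have hrem := (isLittleO_sub_half_sq_smul hf hf' h0 h0').tendsto_inv_smul_nhds_zero.mono_left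
    (nhdsWithin_le_nhds (s := {0}ᶜ))
  refine (zero_add ((2 : 𝕜)⁻¹ • b) ▸ hrem.add_const ((2 : 𝕜)⁻¹ • b)).congr' ?_
  filter_upwards [self_mem_nhdsWithin] with s hs
  have hs0 : s ≠ 0 := hs
  rw [smul_sub, smul_smul, show (s ^ 2)⁻¹ * (s ^ 2 / 2) = 2⁻¹ by field_simp, sub_add_cancel]

section ComplexArccos

variable {z : ℂ}

lemma hasDerivAt_complexArccos_sq (hz : z ∈ cutPlane) :
    HasDerivAt (fun z => complexArccos z ^ 2) (-2 * (complexArccos z / sqrtOneSubSq z)) z := by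
  refine ((hasDerivAt_complexArccos hz).pow 2).congr_deriv ?_
  push_cast
  ring

lemma hasDerivAt_complexArccos_div_sqrtOneSubSq (hz : z ∈ cutPlane) :
    HasDerivAt (fun z => complexArccos z / sqrtOneSubSq z)
      (-(1 - z * (complexArccos z / sqrtOneSubSq z)) / (1 - z ^ 2)) z := by
  have hne := sqrtOneSubSq_ne_zero hz
  refine ((hasDerivAt_complexArccos hz).div (hasDerivAt_sqrtOneSubSq hz) hne).congr_deriv ?_
  rw [← sqrtOneSubSq_sq hz]
  field_simp
  ring

end ComplexArccos

/-- `arccos u / √(1 - u²)`, that is `δ / sin δ` for `u = cos δ`. -/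
noncomputable def arccosRatio (u : ℝ) : ℝ := arccos u / √(1 - u ^ 2)

/-- The factor `1 - δ cot δ`, where `u = cos δ`. -/
noncomputable def cotFactor (u : ℝ) : ℝ := 1 - u * arccosRatio u

/-- The second derivative in `v` of the phase at the critical point `θ`. -/
noncomputable def phaseHessian (c θ : ℝ) : ℝ :=
  2 * (1 - c ^ 2) / (1 - (c * Real.cos θ) ^ 2) * cotFactor (c * Real.cos θ)

lemma one_sub_sq_pos {u : ℝ} (hu : u ∈ Ioo (-1) 1) : 0 < 1 - u ^ 2 := by
  nlinarith [hu.1, hu.2]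

lemma arccosRatio_pos {u : ℝ} (hu : u ∈ Ioo (-1) 1) : 0 < arccosRatio u :=
  div_pos (arccos_pos.2 hu.2) (Real.sqrt_pos.2 (one_sub_sq_pos hu))

lemma cotFactor_pos {u : ℝ} (hu : u ∈ Ioo (-1) 1) : 0 < cotFactor u := by
  have hδ : 0 < arccos u := arccos_pos.2 hu.2
  have hcos : Real.cos (arccos u) = u := cos_arccos hu.1.le hu.2.le
  have hsin : 0 < Real.sin (arccos u) := by
    rw [sin_arccos]
    exact Real.sqrt_pos.2 (one_sub_sq_pos hu)
  rw [cotFactor, arccosRatio, ← sin_arccos, ← mul_div_assoc, sub_pos, div_lt_one hsin]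
  rcases le_or_gt u 0 with hneg | hpos
  · exact (mul_nonpos_of_nonpos_of_nonneg hneg hδ.le).trans_lt hsin
  · have htan := Real.lt_tan hδ (arccos_lt_pi_div_two.2 hpos)
    rw [Real.tan_eq_sin_div_cos, hcos, lt_div_iff₀ hpos] at htan
    linarith

lemma mul_cos_mem_Ioo {c : ℝ} (hc : c ∈ Ioo 0 1) (θ : ℝ) : c * Real.cos θ ∈ Ioo (-1) 1 := by
  constructor <;> nlinarith [hc.1, hc.2, Real.cos_le_one θ, Real.neg_one_le_cos θ]

lemma hasDerivAt_add_I_mul (θ : ℂ) (v : ℝ) (s : ℂ) :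
    HasDerivAt (fun s : ℂ => θ + I * (s * v)) (I * v) s := by
  simpa using (((hasDerivAt_id s).mul_const (v : ℂ)).const_mul I).const_add θ

/-- `circlePoint` as a holomorphic function of `s = √t`. -/
noncomputable def circleCurve (c θ v ψ : ℝ) (s : ℂ) : ℂ :=
  c * Complex.cos (θ + I * (s * v)) + s ^ 2 * Complex.exp (ψ * I)

/-- The derivative of `circleCurve`. -/
noncomputable def circleCurveDeriv (c θ v ψ : ℝ) (s : ℂ) : ℂ :=
  c * (-Complex.sin (θ + I * (s * v)) * (I * v)) + 2 * s * Complex.exp (ψ * I)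

lemma circlePoint_eq_circleCurve {t : ℝ} (ht : 0 ≤ t) (c θ v ψ : ℝ) :
    circlePoint c θ t v ψ = circleCurve c θ v ψ (√t : ℝ) := by
  rw [circlePoint, circleCurve, contourPoint, ← Complex.ofReal_pow, Real.sq_sqrt ht]

lemma hasDerivAt_circleCurve (c θ v ψ : ℝ) (s : ℂ) :
    HasDerivAt (circleCurve c θ v ψ) (circleCurveDeriv c θ v ψ s) s := by
  refine (((hasDerivAt_add_I_mul θ v s).ccos.const_mul (c : ℂ)).add
    ((hasDerivAt_pow 2 s).mul_const (Complex.exp (ψ * I)))).congr_deriv ?_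
  simp [circleCurveDeriv]

lemma hasDerivAt_circleCurveDeriv (c θ v ψ : ℝ) :
    HasDerivAt (circleCurveDeriv c θ v ψ)
      ((c * Real.cos θ : ℝ) * v ^ 2 + 2 * Complex.exp (ψ * I)) 0 := by
  refine ((((hasDerivAt_add_I_mul θ v 0).csin.neg.mul_const (I * (v : ℂ))).const_mul (c : ℂ)).add
    (((hasDerivAt_id 0).const_mul 2).mul_const (Complex.exp (ψ * I)))).congr_deriv ?_
  simp only [zero_mul, mul_zero, add_zero, mul_one]
  push_cast
  linear_combination -(c : ℂ) * Complex.cos θ * v ^ 2 * Complex.I_sq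

lemma circleCurve_zero (c θ v ψ : ℝ) : circleCurve c θ v ψ 0 = (c * Real.cos θ : ℝ) := by
  simp [circleCurve]

lemma circleCurveDeriv_zero (c θ v ψ : ℝ) :
    circleCurveDeriv c θ v ψ 0 = -(c * Real.sin θ : ℝ) * (I * v) := by
  simp [circleCurveDeriv, mul_assoc]

section Phase

variable {c θ η : ℝ}

lemma circleCurve_zero_mem_cutPlane (hc : c ∈ Ioo 0 1) (θ v ψ : ℝ) :
    circleCurve c θ v ψ 0 ∈ cutPlane :=
  circleCurve_zero c θ v ψ ▸ ofReal_mem_cutPlane (mul_cos_mem_Ioo hc θ)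

lemma complexArccos_div_sqrtOneSubSq_circleCurve_zero (hc : c ∈ Ioo 0 1) (θ v ψ : ℝ) :
    complexArccos (circleCurve c θ v ψ 0) / sqrtOneSubSq (circleCurve c θ v ψ 0)
      = (arccosRatio (c * Real.cos θ) : ℝ) := by
  have hu := mul_cos_mem_Ioo hc θ
  rw [circleCurve_zero, complexArccos_ofReal hu, sqrtOneSubSq_ofReal hu, arccosRatio,
    Complex.ofReal_div]

lemma hasDerivAt_phase {v ψ : ℝ} {s : ℂ} (hs : circleCurve c θ v ψ s ∈ cutPlane) (η : ℝ) :
    HasDerivAt (fun s => complexArccos (circleCurve c θ v ψ s) ^ 2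
        - ((θ : ℂ) - η + I * (s * v)) ^ 2)
      (-2 * (complexArccos (circleCurve c θ v ψ s) / sqrtOneSubSq (circleCurve c θ v ψ s))
          * circleCurveDeriv c θ v ψ s
        - 2 * ((θ : ℂ) - η + I * (s * v)) * (I * v)) s := by
  refine (((hasDerivAt_complexArccos_sq hs).comp s (hasDerivAt_circleCurve c θ v ψ s)).sub
    ((hasDerivAt_add_I_mul (θ - η) v s).pow 2)).congr_deriv ?_
  push_cast
  ring

lemma hasDerivAt_phase_deriv (hc : c ∈ Ioo 0 1) (θ η v ψ : ℝ) :
    HasDerivAt (fun s =>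
      -2 * (complexArccos (circleCurve c θ v ψ s) / sqrtOneSubSq (circleCurve c θ v ψ s))
          * circleCurveDeriv c θ v ψ s
        - 2 * ((θ : ℂ) - η + I * (s * v)) * (I * v))
      (phaseHessian c θ * v ^ 2
        - 4 * (arccosRatio (c * Real.cos θ) : ℝ) * Complex.exp (ψ * I)) 0 := by
  have hcut := circleCurve_zero_mem_cutPlane hc θ v ψ
  refine (((((hasDerivAt_complexArccos_div_sqrtOneSubSq hcut).comp 0
    (hasDerivAt_circleCurve c θ v ψ 0)).const_mul (-2)).mul
    (hasDerivAt_circleCurveDeriv c θ v ψ)).sub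
    (((hasDerivAt_add_I_mul (θ - η) v 0).const_mul 2).mul_const (I * (v : ℂ)))).congr_deriv ?_
  simp only [Function.comp_apply, complexArccos_div_sqrtOneSubSq_circleCurve_zero hc,
    circleCurveDeriv_zero]
  rw [circleCurve_zero, phaseHessian, cotFactor]
  have hne : (1 : ℂ) - c ^ 2 * Complex.cos θ ^ 2 ≠ 0 := by
    rw [← mul_pow]
    exact_mod_cast (one_sub_sq_pos (mul_cos_mem_Ioo hc θ)).ne'
  push_cast
  field_simp
  generalize (arccosRatio (c * Real.cos θ) : ℂ) = g
  linear_combination 2 * v ^ 2 * (c ^ 2 * (1 - c * Complex.cos θ * g) * Complex.sin θ ^ 2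
    - (1 - c ^ 2 * Complex.cos θ ^ 2)) * Complex.I_sq
    - 2 * v ^ 2 * c ^ 2 * (1 - c * Complex.cos θ * g) * Complex.sin_sq_add_cos_sq (θ : ℂ)

lemma tendsto_phase (hc : c ∈ Ioo 0 1)
    (hcrit : θ - η = c * Real.sin θ * arccosRatio (c * Real.cos θ)) (v ψ : ℝ) :
    Tendsto (fun s : ℂ => (s ^ 2)⁻¹ • (complexArccos (circleCurve c θ v ψ s) ^ 2
        - ((θ : ℂ) - η + I * (s * v)) ^ 2
        - ((arccos (c * Real.cos θ) ^ 2 - (θ - η) ^ 2 : ℝ) : ℂ))) (𝓝[≠] 0)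
      (𝓝 ((2 : ℂ)⁻¹ • (phaseHessian c θ * v ^ 2
        - 4 * (arccosRatio (c * Real.cos θ) : ℝ) * Complex.exp (ψ * I)))) := by
  have hcut : ∀ᶠ s in 𝓝 (0 : ℂ), circleCurve c θ v ψ s ∈ cutPlane :=
    (hasDerivAt_circleCurve c θ v ψ 0).continuousAt.eventually
      (isOpen_cutPlane.mem_nhds (circleCurve_zero_mem_cutPlane hc θ v ψ))
  refine tendsto_inv_sq_smul (hcut.mono fun s hs => (hasDerivAt_phase hs η).sub_const _)
    (hasDerivAt_phase_deriv hc θ η v ψ) ?_ ?_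
  · rw [circleCurve_zero, complexArccos_ofReal (mul_cos_mem_Ioo hc θ)]
    push_cast
    ring
  · have hcrit' : (θ : ℂ) - η = (c * Real.sin θ : ℝ) * (arccosRatio (c * Real.cos θ) : ℝ) := by
      exact_mod_cast hcrit
    rw [complexArccos_div_sqrtOneSubSq_circleCurve_zero hc, circleCurveDeriv_zero, hcrit']
    ring

end Phase

/-! ### Laplace's method -/

section Laplace

variable {c θ η : ℝ}

lemma tendsto_ofReal_sqrt_nhdsNE_zero :
    Tendsto (fun t : ℝ => ((√t : ℝ) : ℂ)) (𝓝[>] 0) (𝓝[≠] 0) := by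
  refine tendsto_nhdsWithin_iff.2 ⟨?_, ?_⟩
  · have hcont : Continuous fun t : ℝ => ((√t : ℝ) : ℂ) := by fun_prop
    have hzero := hcont.tendsto 0
    simp only [Real.sqrt_zero, Complex.ofReal_zero] at hzero
    exact hzero.mono_left nhdsWithin_le_nhds
  · filter_upwards [self_mem_nhdsWithin] with t ht
    exact Complex.ofReal_ne_zero.2 (Real.sqrt_pos.2 ht).ne'

lemma tendsto_cexp_phase (hc : c ∈ Ioo 0 1)
    (hcrit : θ - η = c * Real.sin θ * arccosRatio (c * Real.cos θ)) (v ψ : ℝ) :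
    Tendsto (fun t : ℝ => Complex.exp (((θ : ℂ) - η + I * (√t * v)) ^ 2 / (4 * t))
        * Complex.exp (-complexArccos (circlePoint c θ t v ψ) ^ 2 / (4 * t))
        * Real.exp ((arccos (c * Real.cos θ) ^ 2 - (θ - η) ^ 2) / (4 * t)))
      (𝓝[>] 0) (𝓝 (Complex.exp (-(phaseHessian c θ / 8 : ℝ) * v ^ 2)
        * Complex.exp ((arccosRatio (c * Real.cos θ) / 2 : ℝ) * Complex.exp (ψ * I)))) := by
  have hphase := ((tendsto_phase hc hcrit v ψ).comp tendsto_ofReal_sqrt_nhdsNE_zero).mul_const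
    (-(1 / 4) : ℂ)
  have hlimit : (2 : ℂ)⁻¹ • (phaseHessian c θ * v ^ 2
        - 4 * (arccosRatio (c * Real.cos θ) : ℝ) * Complex.exp (ψ * I)) * (-(1 / 4))
      = -(phaseHessian c θ / 8 : ℝ) * v ^ 2
        + (arccosRatio (c * Real.cos θ) / 2 : ℝ) * Complex.exp (ψ * I) := by
    rw [smul_eq_mul]
    push_cast
    ring
  rw [hlimit] at hphase
  rw [← Complex.exp_add]
  refine ((Complex.continuous_exp.tendsto _).comp hphase).congr' ?_
  filter_upwards [self_mem_nhdsWithin] with t ht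
  have ht0 : (t : ℂ) ≠ 0 := Complex.ofReal_ne_zero.2 (ne_of_gt ht)
  simp only [Function.comp_apply, smul_eq_mul]
  rw [Complex.ofReal_exp, ← Complex.exp_add, ← Complex.exp_add,
    circlePoint_eq_circleCurve (le_of_lt ht), ← Complex.ofReal_pow (√t),
    Real.sq_sqrt (le_of_lt ht)]
  congr 1
  push_cast
  field_simp
  ring

lemma sqrt_mul_sqrt_pi_div {t : ℝ} (ht : 0 < t) : √t * √(π / t) = √π := by
  rw [← Real.sqrt_mul ht.le, mul_div_cancel₀ _ ht.ne']

/-- The pointwise limit of the rescaled `thetaIntegrand`. -/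
noncomputable def limitIntegrand (c θ : ℝ) (d : ℕ) (p : ℝ × ℝ) : ℂ :=
  (√π * Real.sin θ : ℝ) * (Complex.exp (-(phaseHessian c θ / 8 : ℝ) * p.1 ^ 2)
    * (Complex.exp ((arccosRatio (c * Real.cos θ) / 2 : ℝ) * Complex.exp (p.2 * I))
      * Complex.exp (-(d * (p.2 * I)))))

lemma tendsto_complexSin_contourPoint (θ v : ℝ) :
    Tendsto (fun t : ℝ => Complex.sin (contourPoint θ t v)) (𝓝[>] 0) (𝓝 (Complex.sin θ)) := by
  have hcont : Continuous fun t : ℝ => Complex.sin (contourPoint θ t v) := by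
    unfold contourPoint
    fun_prop
  have hzero := hcont.tendsto 0
  simp only [contourPoint, Real.sqrt_zero, Complex.ofReal_zero, zero_mul, mul_zero,
    add_zero] at hzero
  exact hzero.mono_left nhdsWithin_le_nhds

lemma tendsto_thetaIntegrand (hc : c ∈ Ioo 0 1)
    (hcrit : θ - η = c * Real.sin θ * arccosRatio (c * Real.cos θ)) {ε : ℝ} (hε : 0 < ε)
    {p : ℝ × ℝ} (hre : ∀ᶠ t in 𝓝[>] 0,
      (complexArccos (circlePoint c θ t p.1 p.2)).re ∈ Icc ε (π - ε)) (d : ℕ) :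
    Tendsto (fun t : ℝ =>
        ((√t * Real.exp ((arccos (c * Real.cos θ) ^ 2 - (θ - η) ^ 2) / (4 * t)) : ℝ) : ℂ)
          * thetaIntegrand c θ η t d p) (𝓝[>] 0) (𝓝 (limitIntegrand c θ d p)) := by
  have hprod := ((((tendsto_cexp_phase hc hcrit p.1 p.2).mul
    (tendsto_complexSin_contourPoint θ p.1)).mul (tendsto_thetaRatio hε hre)).mul_const
    (Complex.exp (-(d * (p.2 * I))))).mul_const ((√π : ℝ) : ℂ)
  have hlimit : Complex.exp (-(phaseHessian c θ / 8 : ℝ) * p.1 ^ 2)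
        * Complex.exp ((arccosRatio (c * Real.cos θ) / 2 : ℝ) * Complex.exp (p.2 * I))
        * Complex.sin θ * 1 * Complex.exp (-(d * (p.2 * I))) * (√π : ℝ)
      = limitIntegrand c θ d p := by
    rw [limitIntegrand]
    push_cast
    ring
  rw [hlimit] at hprod
  refine hprod.congr' ?_
  filter_upwards [self_mem_nhdsWithin] with t ht
  rw [thetaIntegrand, contourWeight, ← sqrt_mul_sqrt_pi_div ht]
  push_cast
  ring

lemma integral_limitIntegrand (hc : c ∈ Ioo 0 1) (θ : ℝ) (d : ℕ) :
    ∫ p, limitIntegrand c θ d p ∂contourMeasure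
      = (√π * Real.sin θ * (√(8 * π / phaseHessian c θ)
        * (2 * π * (arccosRatio (c * Real.cos θ) / 2) ^ d / d !)) : ℝ) := by
  have hgauss : ∫ v : ℝ, Complex.exp (-(phaseHessian c θ / 8 : ℝ) * (v : ℂ) ^ 2)
      = (√(8 * π / phaseHessian c θ) : ℝ) := by
    rw [show 8 * π / phaseHessian c θ = π / (phaseHessian c θ / 8) by
      rw [div_div_eq_mul_div, mul_comm], ← integral_gaussian, ← integral_complex_ofReal]
    push_cast
    rfl
  have hρ : 0 < arccosRatio (c * Real.cos θ) / 2 :=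
    half_pos (arccosRatio_pos (mul_cos_mem_Ioo hc θ))
  simp only [limitIntegrand]
  rw [integral_const_mul, contourMeasure, integral_prod_mul
    (fun v : ℝ => Complex.exp (-(phaseHessian c θ / 8 : ℝ) * (v : ℂ) ^ 2))
    (fun ψ : ℝ => Complex.exp ((arccosRatio (c * Real.cos θ) / 2 : ℝ) * Complex.exp (ψ * I))
      * Complex.exp (-(d * (ψ * I)))),
    ← intervalIntegral.integral_of_le (by positivity), integral_exp_circle_mul_exp_neg hρ, hgauss]
  push_cast
  rfl

lemma ContourBound.norm_mul_thetaIntegrand_le {t ε E C Q : ℝ} (ht : 0 < t)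
    (h : ContourBound c θ η t ε (C * Real.exp (-E / (4 * t)))) {p : ℝ × ℝ}
    (hQ : ‖thetaRatio t (complexArccos (circlePoint c θ t p.1 p.2))‖ ≤ Q) (d : ℕ) :
    ‖((√t * Real.exp (E / (4 * t)) : ℝ) : ℂ) * thetaIntegrand c θ η t d p‖
      ≤ √π * (C * Real.exp (-|p.1|)) * Q := by
  have hbound := h.norm_mul_exp_le p.1 p.2
  set A := complexArccos (circlePoint c θ t p.1 p.2) with hA
  have hexpA : ‖Complex.exp (-A ^ 2 / (4 * t))‖ = Real.exp (-(A ^ 2).re / (4 * t)) := by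
    rw [Complex.norm_exp, show 4 * (t : ℂ) = ((4 * t : ℝ) : ℂ) by push_cast; rfl,
      Complex.div_ofReal_re, Complex.neg_re]
  have hcancel : Real.exp (E / (4 * t)) * Real.exp (-E / (4 * t)) = 1 := by
    rw [← Real.exp_add, ← add_div, add_neg_cancel, zero_div, Real.exp_zero]
  rw [thetaIntegrand, ← hA]
  simp only [norm_mul, norm_cexp_neg_nat_mul_I, mul_one, Complex.norm_real, hexpA]
  rw [Real.norm_of_nonneg (Real.sqrt_nonneg t), Real.norm_of_nonneg (Real.exp_pos _).le,
    Real.norm_of_nonneg (Real.sqrt_nonneg _), ← sqrt_mul_sqrt_pi_div ht]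
  have hpos : 0 ≤ C * Real.exp (-E / (4 * t)) * Real.exp (-|p.1|) := le_trans (by positivity) hbound
  calc √t * Real.exp (E / (4 * t)) * (‖contourWeight θ η t p.1‖
        * (√(π / t) * Real.exp (-(A ^ 2).re / (4 * t)) * ‖thetaRatio t A‖))
      = √t * √(π / t) * Real.exp (E / (4 * t)) * (‖contourWeight θ η t p.1‖
        * Real.exp (-(A ^ 2).re / (4 * t))) * ‖thetaRatio t A‖ := by ring
    _ ≤ √t * √(π / t) * Real.exp (E / (4 * t))
        * (C * Real.exp (-E / (4 * t)) * Real.exp (-|p.1|)) * Q := by gcongr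
    _ = √t * √(π / t) * (C * Real.exp (-|p.1|)) * Q := by
        linear_combination (√t * √(π / t) * (C * Real.exp (-|p.1|)) * Q) * hcancel

lemma tendsto_integral_thetaIntegrand (hc : c ∈ Ioo 0 1) (hθ : θ ∈ Ioo 0 π)
    (hcrit : θ - η = c * Real.sin θ * arccosRatio (c * Real.cos θ)) (d : ℕ) :
    Tendsto (fun t : ℝ =>
        ((√t * Real.exp ((arccos (c * Real.cos θ) ^ 2 - (θ - η) ^ 2) / (4 * t)) : ℝ) : ℂ)
          * ∫ p, thetaIntegrand c θ η t d p ∂contourMeasure) (𝓝[>] 0)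
      (𝓝 (∫ p, limitIntegrand c θ d p ∂contourMeasure)) := by
  obtain ⟨ε, hε, t₁, ht₁, C, hC⟩ := exists_contourBound hc hθ η
  obtain ⟨Q, hQ⟩ := exists_forall_norm_thetaRatio_le hε
  have hsmall : ∀ᶠ t in 𝓝[>] (0 : ℝ), t ∈ Ioc 0 t₁ := Ioc_mem_nhdsGT ht₁.1
  simp only [← integral_const_mul]
  refine tendsto_integral_filter_of_dominated_convergence
    (fun p => √π * (C * Real.exp (-|p.1|)) * Q) ?_ ?_
    (((integrable_exp_neg_abs_fst.const_mul C).const_mul _).mul_const _) ?_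
  · filter_upwards [hsmall] with t ht
    exact ((hC t ht).aestronglyMeasurable_thetaIntegrand ht.1 d).const_mul _
  · filter_upwards [hsmall] with t ht
    exact ae_of_all _ fun p => (hC t ht).norm_mul_thetaIntegrand_le ht.1
      (hQ t ⟨ht.1, ht.2.trans ht₁.2⟩ _ ((hC t ht).re_mem_Icc p.1 p.2)) d
  · exact ae_of_all _ fun p => tendsto_thetaIntegrand hc hcrit hε
      (hsmall.mono fun t ht => (hC t ht).re_mem_Icc p.1 p.2) d

lemma contourConst_eq {t : ℝ} (ht : 0 < t) (α : ℕ) :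
    α ! * (4 * t) ^ (α + 2) * contourConst α t
      = Real.exp ((α + 1) * (α + 3) * t) * (2 ^ (α + 2) * (α + 2)! / (4 * π * √π)) := by
  have h4π : √(4 * π) = 2 * √π := by
    rw [Real.sqrt_mul (by norm_num), show (4 : ℝ) = 2 ^ 2 by norm_num, Real.sqrt_sq (by norm_num)]
  have h4t : (4 * t) ^ (α + 2) = 2 ^ (α + 2) * (2 ^ (α + 1) * 2) * t ^ (α + 2) := by
    rw [← pow_succ, ← mul_pow, ← mul_pow]
    norm_num
  rw [contourConst, h4π, h4t]
  field_simp
  norm_num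

lemma tendsto_exp_mul_nhdsGT_zero (a : ℝ) :
    Tendsto (fun t : ℝ => Real.exp (a * t)) (𝓝[>] 0) (𝓝 1) := by
  have hcont : Continuous fun t : ℝ => Real.exp (a * t) := by fun_prop
  have hzero := hcont.tendsto 0
  simp only [mul_zero, Real.exp_zero] at hzero
  exact hzero.mono_left nhdsWithin_le_nhds

lemma laplaceConst_eq (α : ℕ) {H g s : ℝ} :
    2 ^ (α + 2) * (α + 2)! / (4 * π * √π)
        * (√π * s * (√(8 * π / H) * (2 * π * (g / 2) ^ (α + 2) / (α + 2)!)))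
      = √(2 * π / H) * s * g ^ (α + 2) := by
  have hsqrt : √(8 * π / H) = 2 * √(2 * π / H) := by
    rw [show 8 * π / H = 2 ^ 2 * (2 * π / H) by ring, Real.sqrt_mul (by norm_num),
      Real.sqrt_sq (by norm_num)]
  rw [hsqrt, div_pow]
  field_simp
  ring

lemma tendsto_modeKernel (hc : c ∈ Ioo 0 1) (hθ : θ ∈ Ioo 0 π)
    (hcrit : θ - η = c * Real.sin θ * arccosRatio (c * Real.cos θ)) (α : ℕ) :
    Tendsto (fun t : ℝ => α ! * (4 * t) ^ (α + 2) * √t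
        * Real.exp ((arccos (c * Real.cos θ) ^ 2 - (θ - η) ^ 2) / (4 * t)) * modeKernel α c t η)
      (𝓝[>] 0) (𝓝 (√(2 * π / phaseHessian c θ) * Real.sin θ
        * arccosRatio (c * Real.cos θ) ^ (α + 2))) := by
  obtain ⟨ε, -, t₁, ht₁, C, hC⟩ := exists_contourBound hc hθ η
  have hintegral := tendsto_integral_thetaIntegrand hc hθ hcrit (α + 2)
  rw [integral_limitIntegrand hc] at hintegral
  have hprod := ((tendsto_exp_mul_nhdsGT_zero ((α + 1) * (α + 3))).mul_const
    (2 ^ (α + 2) * (α + 2)! / (4 * π * √π))).mul ((Complex.continuous_re.tendsto _).comp hintegral)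
  rw [one_mul, Complex.ofReal_re, laplaceConst_eq] at hprod
  refine hprod.congr' ?_
  filter_upwards [Ioc_mem_nhdsGT ht₁.1] with t ht
  have hkernel := (hC t ht).modeKernel_eq_integral ht.1 ⟨hc.1.le, hc.2.le⟩ α
  have hre := congrArg Complex.re hkernel
  rw [Complex.ofReal_re, Complex.re_ofReal_mul] at hre
  rw [Function.comp_apply, Complex.re_ofReal_mul, ← contourConst_eq ht.1, hre]
  ring

end Laplace

/-! ### Normalisation of the limit -/

lemma mul_rpow_two_mul_add_three_halves {t : ℝ} (ht : 0 < t) (n : ℕ) :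
    (4 * π * t) ^ (2 * (n : ℝ) + 3 / 2)
      = (4 * t) ^ (2 * n + 1) * √t * (π ^ (2 * n + 1) * (2 * √π)) := by
  have hsqrt : √(4 * π * t) = 2 * √π * √t := by
    rw [Real.sqrt_mul (by positivity), Real.sqrt_mul (by norm_num),
      show (4 : ℝ) = 2 ^ 2 by norm_num, Real.sqrt_sq (by norm_num)]
  rw [show 2 * (n : ℝ) + 3 / 2 = ((2 * n + 1 : ℕ) : ℝ) + 1 / 2 by push_cast; ring,
    Real.rpow_add (by positivity), Real.rpow_natCast, ← Real.sqrt_eq_rpow, hsqrt,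
    show 4 * π * t = 4 * t * π by ring, mul_pow]
  ring

lemma cos_mem_Ioo_zero_one {r : ℝ} (hr : r ∈ Ioo 0 (π / 2)) : Real.cos r ∈ Ioo 0 1 := by
  refine ⟨Real.cos_pos_of_mem_Ioo ⟨by linarith [hr.1, pi_pos], hr.2⟩, ?_⟩
  simpa using Real.cos_lt_cos_of_nonneg_of_le_pi_div_two le_rfl hr.2.le hr.1

lemma arccos_sq_sub_sq_eq {r θ η : ℝ} (hr : r ∈ Ioo 0 (π / 2)) (hθ : Real.sin θ ≠ 0)
    (hcrit : θ - η = Real.cos r * Real.sin θ * arccosRatio (Real.cos r * Real.cos θ)) :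
    arccos (Real.cos r * Real.cos θ) ^ 2 - (θ - η) ^ 2
      = (θ - η) ^ 2 * Real.tan r ^ 2 / Real.sin θ ^ 2 := by
  have hc := cos_mem_Ioo_zero_one hr
  have hu := one_sub_sq_pos (mul_cos_mem_Ioo hc θ)
  have hratio : arccosRatio (Real.cos r * Real.cos θ) ^ 2 * (1 - (Real.cos r * Real.cos θ) ^ 2)
      = arccos (Real.cos r * Real.cos θ) ^ 2 := by
    rw [arccosRatio, div_pow, Real.sq_sqrt hu.le, div_mul_cancel₀ _ hu.ne']
  have htan : (θ - η) ^ 2 * Real.tan r ^ 2 / Real.sin θ ^ 2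
      = arccosRatio (Real.cos r * Real.cos θ) ^ 2 * Real.sin r ^ 2 := by
    have hc0 := hc.1.ne'
    rw [hcrit, Real.tan_eq_sin_div_cos]
    field_simp
  rw [htan, ← hratio, hcrit, mul_pow, mul_pow, mul_pow, Real.sin_sq θ, Real.sin_sq r]
  ring

lemma sqrt_two_mul_pi_div_phaseHessian {r : ℝ} (hr : r ∈ Ioo 0 (π / 2)) (θ : ℝ) :
    √(2 * π / phaseHessian (Real.cos r) θ)
      = √π * √(1 - (Real.cos r * Real.cos θ) ^ 2)
        / (Real.sin r * √(cotFactor (Real.cos r * Real.cos θ))) := by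
  have hsin : 0 < Real.sin r := Real.sin_pos_of_pos_of_lt_pi hr.1 (by linarith [hr.2, pi_pos])
  have hcot := cotFactor_pos (mul_cos_mem_Ioo (cos_mem_Ioo_zero_one hr) θ)
  have hratio : 2 * π / phaseHessian (Real.cos r) θ
      = π * (1 - (Real.cos r * Real.cos θ) ^ 2)
        / (Real.sin r ^ 2 * cotFactor (Real.cos r * Real.cos θ)) := by
    rw [phaseHessian, ← Real.sin_sq]
    field_simp
  rw [hratio, Real.sqrt_div' _ (by positivity), Real.sqrt_mul pi_pos.le,
    Real.sqrt_mul (sq_nonneg _), Real.sqrt_sq hsin.le]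

lemma pKernel_mul_rpow_mul_sin {n : ℕ} (hn : 1 ≤ n) {J : ℕ → ℕ → ℕ → ℝ → ℝ} (hJ : IsJacobi J)
    {t r η : ℝ} (ht : 0 < t) (hr : r ∈ Ioo 0 (π / 2)) (hη : η ∈ Ioo 0 π) :
    pKernel n J t r η * (4 * π * t) ^ (2 * (n : ℝ) + 3 / 2) * Real.sin η
      = (2 * n - 1)! * (4 * t) ^ (2 * n + 1) * √t * modeKernel (2 * n - 1) (Real.cos r) t η
        / √π := by
  have hsin : Real.sin η ≠ 0 := (Real.sin_pos_of_mem_Ioo hη).ne'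
  have hπ : √π ^ 2 = π := Real.sq_sqrt pi_pos.le
  rw [pKernel_eq_modeKernel hn hJ t hr hη.1.ne', mul_rpow_two_mul_add_three_halves ht,
    pow_succ π (2 * n + 1)]
  field_simp
  rw [hπ, mul_comm]

lemma tendsto_pKernel {n : ℕ} (hn : 1 ≤ n) {J : ℕ → ℕ → ℕ → ℝ → ℝ} (hJ : IsJacobi J)
    {r θ η : ℝ} (hr : r ∈ Ioo 0 (π / 2)) (hη : η ∈ Ioo 0 π) (hθ : θ ∈ Ioo 0 π)
    (hcrit : θ - η = Real.cos r * Real.sin θ * arccosRatio (Real.cos r * Real.cos θ)) :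
    Tendsto (fun t : ℝ => pKernel n J t r η * (4 * π * t) ^ (2 * (n : ℝ) + 3 / 2) * Real.sin η
        * Real.exp ((θ - η) ^ 2 * Real.tan r ^ 2 / (4 * t * Real.sin θ ^ 2)))
      (𝓝[>] 0) (𝓝 (√(1 - (Real.cos r * Real.cos θ) ^ 2)
        / (Real.sin r * √(cotFactor (Real.cos r * Real.cos θ))) * Real.sin θ
        * arccosRatio (Real.cos r * Real.cos θ) ^ (2 * n + 1))) := by
  have hmode := (tendsto_modeKernel (cos_mem_Ioo_zero_one hr) hθ hcrit (2 * n - 1)).div_const √π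
  rw [show 2 * n - 1 + 2 = 2 * n + 1 by lia, sqrt_two_mul_pi_div_phaseHessian hr,
    arccos_sq_sub_sq_eq hr (Real.sin_pos_of_mem_Ioo hθ).ne' hcrit] at hmode
  have hπ : √π ≠ 0 := (Real.sqrt_pos.2 pi_pos).ne'
  convert hmode.congr' ?_ using 2
  · field_simp
  filter_upwards [self_mem_nhdsWithin] with t ht
  rw [pKernel_mul_rpow_mul_sin hn hJ ht hr hη, div_div, mul_comm (4 * t)]
  ring

lemma limit_mul_normalization {u s w : ℝ} (hu : u ∈ Ioo (-1) 1) (hs : s ≠ 0) (hw : w ≠ 0)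
    (n : ℕ) :
    √(1 - u ^ 2) / (s * √(cotFactor u)) * w * arccosRatio u ^ (2 * n + 1)
      * (s / w * (1 - u ^ 2) ^ n * √(cotFactor u) * (arccos u ^ (2 * n + 1))⁻¹) = 1 := by
  have hsq := Real.sqrt_pos.2 (one_sub_sq_pos hu)
  have hcot := Real.sqrt_pos.2 (cotFactor_pos hu)
  have harccos := Real.arccos_pos.2 hu.2
  have hpow : (1 - u ^ 2) ^ n = √(1 - u ^ 2) ^ (2 * n) := by
    rw [pow_mul, Real.sq_sqrt (one_sub_sq_pos hu).le]
  rw [hpow, arccosRatio, div_pow, pow_succ √(1 - u ^ 2)]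
  field_simp

end HopfHeatKernel

/-- small-time asymptotics of the subelliptic heat kernel outside of the
cut-locus, via the steepest descent method. -/
theorem stmt_12 (n : ℕ) (hn : 1 ≤ n) (J : ℕ → ℕ → ℕ → ℝ → ℝ) (hJ : IsJacobi J)
    (r η φ : ℝ) (hr : r ∈ Set.Ioo 0 (π / 2)) (hη : η ∈ Set.Ioo 0 π)
    (hφ : φ ∈ Set.Ioo (-π) 0)
    (hcrit : φ + η = Real.cos r * Real.sin φ * Real.arccos (Real.cos φ * Real.cos r) /
      Real.sqrt (1 - Real.cos r ^ 2 * Real.cos φ ^ 2))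
    (u : ℝ) (hu : u = Real.cos r * Real.cos φ) :
    Filter.Tendsto (fun t : ℝ =>
      pKernel n J t r η * (4 * π * t) ^ (2 * (n : ℝ) + 3 / 2) *
        (Real.sin η * Real.sin r / (-Real.sin φ)) * (1 - u ^ 2) ^ n *
        Real.sqrt (1 - u * Real.arccos u / Real.sqrt (1 - u ^ 2)) *
        (Real.arccos u ^ (2 * n + 1))⁻¹ *
        Real.exp ((φ + η) ^ 2 * Real.tan r ^ 2 / (4 * t * Real.sin φ ^ 2)))
      (𝓝[>] 0) (𝓝 1) := by
  obtain ⟨θ, rfl⟩ : ∃ θ, φ = -θ := ⟨-φ, (neg_neg φ).symm⟩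
  have hθ : θ ∈ Ioo 0 π := ⟨neg_lt_zero.1 hφ.2, neg_lt_neg_iff.1 hφ.1⟩
  rw [Real.cos_neg] at hcrit hu
  have hcritical : θ - η
      = Real.cos r * Real.sin θ * HopfHeatKernel.arccosRatio (Real.cos r * Real.cos θ) := by
    rw [Real.sin_neg, mul_comm (Real.cos θ), ← mul_pow] at hcrit
    rw [HopfHeatKernel.arccosRatio]
    linear_combination -hcrit
  have hkernel := (HopfHeatKernel.tendsto_pKernel hn hJ hr hη hθ hcritical).mul_const
    (Real.sin r / Real.sin θ * (1 - u ^ 2) ^ n * √(HopfHeatKernel.cotFactor u)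
      * (arccos u ^ (2 * n + 1))⁻¹)
  have hu_mem := HopfHeatKernel.mul_cos_mem_Ioo (HopfHeatKernel.cos_mem_Ioo_zero_one hr) θ
  have hsin_r : Real.sin r ≠ 0 :=
    (Real.sin_pos_of_pos_of_lt_pi hr.1 (hr.2.trans (half_lt_self pi_pos))).ne'
  rw [← hu] at hkernel hu_mem
  rw [HopfHeatKernel.limit_mul_normalization hu_mem hsin_r
    (Real.sin_pos_of_mem_Ioo hθ).ne'] at hkernel
  refine hkernel.congr fun t => ?_
  rw [Real.sin_neg, neg_neg, neg_sq, neg_add_eq_sub, ← neg_sq (η - θ), neg_sub,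
    HopfHeatKernel.cotFactor, HopfHeatKernel.arccosRatio, mul_div_assoc u]
  ring
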